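/- In the uniform case p_1 = … = p_A = 1/A with M ≥ 2 (so that ρ = 1 + log_A M > 1), there exists a continuous 1-periodic function P_V : ℝ → ℝ with P_V(x) > 0 for all x such that Var(S_n) = P_V(log_A n) · n^ρ · (1 + o(1)) as n → ∞, where S_n is the size of the G-trie built from n random labelings. -/

import Mathlib

open MeasureTheory ProbabilityTheory Filter Topology

/-- A word `w` over `{1,…,M}×{1,…,A}` occurs in the labeling `L` of the infinite rooted
`M`-ary tree (nodes are identified with words over `Fin M`; the value of `L` on the root `[]`
is irrelevant) if along the path determined by the first components the labels are the
second components. -/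
def Occurs {M A : ℕ} (L : List (Fin M) → Fin A) (w : List (Fin M × Fin A)) : Prop :=
  ∀ t : Fin w.length, L ((w.take (t.1 + 1)).map Prod.fst) = (w.get t).2

/-- The number of labelings among `Ls` in which the word `w` occurs. -/
noncomputable def occCount {M A n : ℕ} (Ls : Fin n → List (Fin M) → Fin A)
    (w : List (Fin M × Fin A)) : ℕ :=
  Nat.card {i : Fin n // Occurs (Ls i) w}

/-- The G-trie built from the labelings `Ls`: all words occurring in at least two of them. -/
def GTrie {M A n : ℕ} (Ls : Fin n → List (Fin M) → Fin A) : Set (List (Fin M × Fin A)) :=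
  {w | 2 ≤ occCount Ls w}

/-- The size of the G-trie built from the labelings `Ls` (as a real number). -/
noncomputable def gtrieSize {M A n : ℕ} (Ls : Fin n → List (Fin M) → Fin A) : ℝ :=
  (GTrie Ls).ncard

/-- `μL` is the distribution of a random labeling of the infinite rooted `M`-ary tree where
all labels are independent with `P(letter = j) = p j`: every finite cylinder set has the
product probability. -/
def IsLabelingMeasure {M A : ℕ} (p : Fin A → ℝ) (μL : Measure (List (Fin M) → Fin A)) : Prop :=
  ∀ (s : Finset (List (Fin M))) (f : List (Fin M) → Fin A),
    μL {L | ∀ w ∈ s, L w = f w} = ∏ w ∈ s, ENNReal.ofReal (p (f w))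

/-! The size `S_n` is the sum over all words `w` of the indicator that `w` occurs in at least two of
the labelings, so its variance is a sum over pairs of words of covariances. A covariance depends on
the occurrence probabilities of the two words and on their joint occurrence probability `τ`. Over
the pairs of words of given lengths, the average of `τ` is the product of the two occurrence
probabilities. Comparing each covariance with its affine part in `τ` therefore makes the affine
parts cancel, and only second-order Taylor remainders are left; this is what makes the resulting
series converge.

Counting levels from level `log_A n`, binomial counts become Poisson counts, and by dominated
convergence the variance is asymptotic to the sum `Q(n)` of a series `Q(t)` over pairs of levels in
`ℤ`. Shifting all levels by one gives `Q(A t) = M A Q(t) = A ^ ρ Q(t)`, so that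
`P_V(u) = Q(A ^ u) A ^ (-ρ u)` is periodic.

To see that `Q(t) > 0`, expand it by the number of labelings in which both words occur. Each term is
a quadratic form in a sequence indexed by `ℤ`, and by Abel summation this form is a weighted sum of
the squares of the partial sums of the sequence. -/

/-! ### The joint law of two occurrence counts -/

/-- The joint probability `P(N ≤ 1, N' ≤ 1)` of the numbers `N`, `N'` of occurrences, in `n`
independent trials, of two events of probabilities `p` and `p'` and joint probability `τ`. -/
noncomputable def jointAtMostOne (n : ℕ) (p p' τ : ℝ) : ℝ :=
  (1 - p - p' + τ) ^ n + n * (1 - p - p' + τ) ^ (n - 1) * (p + p' - τ)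
    + n * (n - 1) * ((p - τ) * (p' - τ)) * (1 - p - p' + τ) ^ (n - 2)

/-- The derivative of `jointAtMostOne` in `τ`. -/
noncomputable def jointAtMostOneDeriv (n : ℕ) (p p' τ : ℝ) : ℝ :=
  n * (n - 1) * τ * (1 - p - p' + τ) ^ (n - 2)
    + n * (n - 1) * (n - 2) * ((p - τ) * (p' - τ)) * (1 - p - p' + τ) ^ (n - 3)

/-- The second derivative of `jointAtMostOne` in `τ`, for `4 ≤ n`. -/
noncomputable def jointAtMostOneDeriv₂ (n : ℕ) (p p' τ : ℝ) : ℝ :=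
  n * (n - 1) * (1 - p - p' + τ) ^ (n - 4) *
    ((1 - p - p' + τ) ^ 2 + (n - 2) * (3 * τ - p - p') * (1 - p - p' + τ)
      + (n - 2) * (n - 3) * ((p - τ) * (p' - τ)))

/-- The second-order Taylor remainder of `jointAtMostOne` in `τ` at `0`. Only this part of the
covariance of two occurrence indicators survives the summation over words. -/
noncomputable def jointRemainder (n : ℕ) (p p' τ : ℝ) : ℝ :=
  jointAtMostOne n p p' τ - jointAtMostOne n p p' 0 - τ * jointAtMostOneDeriv n p p' 0

/-- The profile `(1 + x)² e⁻ˣ` which, at `x = n p`, controls the second derivative of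
`jointAtMostOne`. -/
noncomputable def decayEnvelope (x : ℝ) : ℝ := (1 + x) ^ 2 * Real.exp (-x)

/-- The limit of `jointRemainder n (x / n) (y / n) (z / n)` as `n → ∞`. -/
noncomputable def poissonRemainder (x y z : ℝ) : ℝ :=
  Real.exp (-(x + y)) * (Real.exp z * (1 + x + y - z + (x - z) * (y - z))
    - (1 + x) * (1 + y) - z * (x * y))

theorem abs_sub_sub_mul_deriv_le {f f' f'' : ℝ → ℝ} {τ B : ℝ} (hτ : 0 ≤ τ)
    (hf : ∀ x, HasDerivAt f (f' x) x) (hf' : ∀ x, HasDerivAt f' (f'' x) x)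
    (hB : ∀ x ∈ Set.Icc 0 τ, |f'' x| ≤ B) :
    |f τ - f 0 - τ * f' 0| ≤ B * τ ^ 2 := by
  have hB0 : 0 ≤ B := (abs_nonneg _).trans (hB 0 (Set.left_mem_Icc.2 hτ))
  have deriv_increment : ∀ s ∈ Set.Icc 0 τ, ‖f' s - f' 0 * 1‖ ≤ B * τ := fun s hs => by
    have h := (convex_Icc (0 : ℝ) τ).norm_image_sub_le_of_norm_hasDerivWithin_le
      (fun x _ => (hf' x).hasDerivWithinAt) hB (Set.left_mem_Icc.2 hτ) hs
    rw [sub_zero, Real.norm_of_nonneg hs.1] at h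
    rw [mul_one]
    exact h.trans (by gcongr; exact hs.2)
  have h := (convex_Icc (0 : ℝ) τ).norm_image_sub_le_of_norm_hasDerivWithin_le
    (f := fun s => f s - f' 0 * s)
    (fun x _ => ((hf x).sub ((hasDerivAt_id x).const_mul (f' 0))).hasDerivWithinAt)
    deriv_increment (Set.left_mem_Icc.2 hτ) (Set.right_mem_Icc.2 hτ)
  rw [sub_zero, Real.norm_of_nonneg hτ, Real.norm_eq_abs] at h
  calc |f τ - f 0 - τ * f' 0| = |f τ - f' 0 * τ - (f 0 - f' 0 * 0)| := by ring_nf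
    _ ≤ B * τ * τ := h
    _ = B * τ ^ 2 := by ring

section JointRemainder

variable {n : ℕ} (p p' τ : ℝ)

theorem hasDerivAt_jointAtMostOne (hn : 3 ≤ n) :
    HasDerivAt (jointAtMostOne n p p') (jointAtMostOneDeriv n p p' τ) τ := by
  obtain ⟨m, rfl⟩ : ∃ m, n = m + 3 := ⟨n - 3, by omega⟩
  have hid := hasDerivAt_id' τ
  have hr : HasDerivAt (fun τ : ℝ => 1 - p - p' + τ) 1 τ := hid.const_add _
  refine ((((hr.fun_pow (m + 3)).add (((hr.fun_pow (m + 2)).const_mul ((m + 3 : ℕ) : ℝ)).mul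
    (hid.const_sub (p + p')))).add ((((hid.const_sub p).mul (hid.const_sub p')).const_mul
      (((m + 3 : ℕ) : ℝ) * (((m + 3 : ℕ) : ℝ) - 1))).mul (hr.fun_pow (m + 1)))).congr_deriv ?_)
  simp only [jointAtMostOneDeriv, Nat.add_sub_cancel, Pi.mul_apply, show m + 3 - 2 = m + 1 by omega,
    show m + 3 - 1 = m + 2 by omega, show m + 2 - 1 = m + 1 by omega]
  push_cast
  ring

theorem hasDerivAt_jointAtMostOneDeriv (hn : 4 ≤ n) :
    HasDerivAt (jointAtMostOneDeriv n p p') (jointAtMostOneDeriv₂ n p p' τ) τ := by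
  obtain ⟨m, rfl⟩ : ∃ m, n = m + 4 := ⟨n - 4, by omega⟩
  have hid := hasDerivAt_id' τ
  have hr : HasDerivAt (fun τ : ℝ => 1 - p - p' + τ) 1 τ := hid.const_add _
  refine (((hid.const_mul (((m + 4 : ℕ) : ℝ) * (((m + 4 : ℕ) : ℝ) - 1))).mul
    (hr.fun_pow (m + 2))).add ((((hid.const_sub p).mul (hid.const_sub p')).const_mul
      (((m + 4 : ℕ) : ℝ) * (((m + 4 : ℕ) : ℝ) - 1) * (((m + 4 : ℕ) : ℝ) - 2))).mul
        (hr.fun_pow (m + 1)))).congr_deriv ?_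
  simp only [jointAtMostOneDeriv₂, Nat.add_sub_cancel, Pi.mul_apply,
    show m + 2 - 1 = m + 1 by omega]
  push_cast
  ring

variable {p p' τ}

theorem abs_jointAtMostOneDeriv₂_le (hn : 4 ≤ n) (hτ : 0 ≤ τ) (hτp : τ ≤ p') (hpp : p' ≤ p)
    (hp : p + p' ≤ 1) :
    |jointAtMostOneDeriv₂ n p p' τ| ≤ Real.exp 4 * n ^ 2 * decayEnvelope (n * p) := by
  have hn4 : (4 : ℝ) ≤ n := by exact_mod_cast hn
  have hp0 : 0 ≤ p := by linarith
  set r : ℝ := 1 - p - p' + τ with hr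
  have hr0 : 0 ≤ r := by linarith
  have hr1 : r ≤ 1 := by linarith
  have pow_le : r ^ (n - 4) ≤ Real.exp 4 * Real.exp (-(n * p)) :=
    calc r ^ (n - 4) ≤ Real.exp (-p) ^ (n - 4) := by
          gcongr
          linarith [Real.add_one_le_exp (-p)]
      _ = Real.exp (4 * p + -(n * p)) := by
          rw [← Real.exp_nat_mul, Nat.cast_sub hn]
          push_cast
          ring_nf
      _ ≤ Real.exp (4 + -(n * p)) := by gcongr; linarith
      _ = Real.exp 4 * Real.exp (-(n * p)) := Real.exp_add _ _
  have quadratic_le : |r ^ 2 + (n - 2) * (3 * τ - p - p') * r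
      + (n - 2) * (n - 3) * ((p - τ) * (p' - τ))| ≤ (1 + n * p) ^ 2 := by
    have h₁ : |r ^ 2| ≤ 1 := by rw [abs_of_nonneg (by positivity)]; exact pow_le_one₀ hr0 hr1
    have h₂ : |((n : ℝ) - 2) * (3 * τ - p - p') * r| ≤ n * (2 * p) * 1 := by
      rw [abs_mul, abs_mul]
      gcongr <;> rw [abs_le] <;> constructor <;> linarith
    have h₃ : |((n : ℝ) - 2) * (n - 3) * ((p - τ) * (p' - τ))| ≤ n * n * (p * p) := by
      rw [abs_mul, abs_mul, abs_mul]
      gcongr <;> rw [abs_le] <;> constructor <;> linarith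
    calc _ ≤ _ := abs_add_three _ _ _
      _ ≤ 1 + n * (2 * p) * 1 + n * n * (p * p) := by gcongr
      _ = (1 + n * p) ^ 2 := by ring
  have hn1 : |(n : ℝ) - 1| ≤ n := by rw [abs_le]; constructor <;> linarith
  rw [jointAtMostOneDeriv₂, ← hr, abs_mul, abs_mul, abs_mul, Nat.abs_cast,
    abs_of_nonneg (pow_nonneg hr0 _)]
  calc _ ≤ (n : ℝ) * n * (Real.exp 4 * Real.exp (-(n * p))) * (1 + n * p) ^ 2 := by gcongr
    _ = Real.exp 4 * n ^ 2 * decayEnvelope (n * p) := by rw [decayEnvelope]; ring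

theorem abs_jointRemainder_le (hn : 4 ≤ n) (hτ : 0 ≤ τ) (hτp : τ ≤ p') (hpp : p' ≤ p)
    (hp : p + p' ≤ 1) :
    |jointRemainder n p p' τ| ≤ Real.exp 4 * n ^ 2 * decayEnvelope (n * p) * τ ^ 2 :=
  abs_sub_sub_mul_deriv_le hτ (hasDerivAt_jointAtMostOne p p' · (by omega))
    (hasDerivAt_jointAtMostOneDeriv p p' · hn)
    fun _ hx => abs_jointAtMostOneDeriv₂_le hn hx.1 (hx.2.trans hτp) hpp hp

end JointRemainder

theorem decayEnvelope_nonneg (x : ℝ) : 0 ≤ decayEnvelope x := by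
  unfold decayEnvelope; positivity

theorem one_add_pow_four_mul_exp_neg_le {x : ℝ} (hx : 0 ≤ x) :
    (1 + x) ^ 4 * Real.exp (-x) ≤ 24 * Real.exp 1 := by
  have h := Real.pow_div_factorial_le_exp (1 + x) (by linarith) 4
  rw [div_le_iff₀ (by positivity)] at h
  calc (1 + x) ^ 4 * Real.exp (-x) ≤ Real.exp (1 + x) * (4 : ℕ).factorial * Real.exp (-x) := by
        gcongr
    _ = 24 * Real.exp 1 := by
        rw [mul_right_comm, ← Real.exp_add, add_neg_cancel_right]
        norm_num [Nat.factorial, mul_comm]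

theorem decayEnvelope_le {x : ℝ} (hx : 0 ≤ x) : decayEnvelope x ≤ 24 * Real.exp 1 :=
  (mul_le_mul_of_nonneg_right (pow_le_pow_right₀ (by linarith) (by norm_num))
    (Real.exp_pos _).le).trans (one_add_pow_four_mul_exp_neg_le hx)

theorem decayEnvelope_mul_sq_le {x : ℝ} (hx : 0 ≤ x) :
    decayEnvelope x * x ^ 2 ≤ 24 * Real.exp 1 :=
  calc decayEnvelope x * x ^ 2 ≤ decayEnvelope x * (1 + x) ^ 2 := by
        have := decayEnvelope_nonneg x
        gcongr
        linarith
    _ = (1 + x) ^ 4 * Real.exp (-x) := by rw [decayEnvelope]; ring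
    _ ≤ _ := one_add_pow_four_mul_exp_neg_le hx

section PoissonLimit

variable {ι : Type*} {l : Filter ι}

theorem tendsto_one_add_pow_exp {N : ι → ℕ} {u : ι → ℝ} {c : ℝ} (hu : Tendsto u l (𝓝 0))
    (hNu : Tendsto (fun k => N k * u k) l (𝓝 c)) :
    Tendsto (fun k => (1 + u k) ^ N k) l (𝓝 (Real.exp c)) := by
  have h1 : Tendsto (fun k => 1 + u k) l (𝓝 1) := by simpa using hu.const_add 1
  have log_slope : Tendsto (fun k => dslope Real.log 1 (1 + u k)) l (𝓝 1) := by
    have := (continuousAt_dslope_same.2 (Real.differentiableAt_log one_ne_zero)).tendsto.comp h1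
    rwa [dslope_same, Real.deriv_log, inv_one] at this
  refine (mul_one c ▸ hNu.mul log_slope).rexp.congr' ?_
  filter_upwards [h1.eventually_const_lt one_pos] with k hk
  have h := sub_smul_dslope Real.log 1 (1 + u k)
  rw [Real.log_one, sub_zero, smul_eq_mul, add_sub_cancel_left] at h
  rw [mul_assoc, h, Real.exp_nat_mul, Real.exp_log hk]

variable {n : ι → ℕ}

theorem tendsto_one_sub_div_pow_exp {s : ι → ℝ} {s₀ : ℝ} (hn : Tendsto n l atTop)
    (hs : Tendsto s l (𝓝 s₀)) (i : ℕ) :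
    Tendsto (fun k => (1 - s k / n k) ^ (n k - i)) l (𝓝 (Real.exp (-s₀))) := by
  have hnR : Tendsto (fun k => (n k : ℝ)) l atTop := tendsto_natCast_atTop_atTop.comp hn
  have hu : Tendsto (fun k => -(s k / n k)) l (𝓝 0) := by simpa using (hs.div_atTop hnR).neg
  refine tendsto_one_add_pow_exp (N := fun k => n k - i) (u := fun k => -(s k / n k)) hu ?_
  have h := hs.neg.add (hu.const_mul (i : ℝ)).neg
  rw [mul_zero, neg_zero, add_zero] at h
  refine h.congr' ?_
  filter_upwards [hn.eventually_ge_atTop i, hn.eventually_gt_atTop 0] with k hki hk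
  have : (n k : ℝ) ≠ 0 := by positivity
  rw [Nat.cast_sub hki]
  field_simp
  ring

variable {x y z : ι → ℝ} {x₀ y₀ z₀ : ℝ}

theorem tendsto_jointAtMostOne (hn : Tendsto n l atTop) (hx : Tendsto x l (𝓝 x₀))
    (hy : Tendsto y l (𝓝 y₀)) (hz : Tendsto z l (𝓝 z₀)) :
    Tendsto (fun k => jointAtMostOne (n k) (x k / n k) (y k / n k) (z k / n k)) l
      (𝓝 (Real.exp (-(x₀ + y₀ - z₀)) * (1 + (x₀ + y₀ - z₀) + (x₀ - z₀) * (y₀ - z₀)))) := by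
  have hinv : Tendsto (fun k => (n k : ℝ)⁻¹) l (𝓝 0) :=
    tendsto_inv_atTop_zero.comp (tendsto_natCast_atTop_atTop.comp hn)
  have hs := (hx.add hy).sub hz
  have hpow := tendsto_one_sub_div_pow_exp hn hs
  have T := ((hpow 0).add ((hpow 1).mul hs)).add
    (((hinv.const_sub 1).mul ((hx.sub hz).mul (hy.sub hz))).mul (hpow 2))
  convert T.congr' ?_ using 2
  · ring
  · filter_upwards [hn.eventually_gt_atTop 0] with k hk
    have : (n k : ℝ) ≠ 0 := by positivity
    have hr : 1 - x k / n k - y k / n k + z k / n k = 1 - (x k + y k - z k) / n k := by ring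
    rw [jointAtMostOne, hr, Nat.sub_zero]
    generalize 1 - (x k + y k - z k) / n k = r
    field_simp

theorem tendsto_jointAtMostOneDeriv_zero (hn : Tendsto n l atTop) (hx : Tendsto x l (𝓝 x₀))
    (hy : Tendsto y l (𝓝 y₀)) :
    Tendsto (fun k => jointAtMostOneDeriv (n k) (x k / n k) (y k / n k) 0 / n k) l
      (𝓝 (Real.exp (-(x₀ + y₀)) * (x₀ * y₀))) := by
  have hinv : Tendsto (fun k => (n k : ℝ)⁻¹) l (𝓝 0) :=
    tendsto_inv_atTop_zero.comp (tendsto_natCast_atTop_atTop.comp hn)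
  have T := (((hinv.const_sub 1).mul ((hinv.const_mul 2).const_sub 1)).mul (hx.mul hy)).mul
    (tendsto_one_sub_div_pow_exp hn (hx.add hy) 3)
  convert T.congr' ?_ using 2
  · ring
  · filter_upwards [hn.eventually_gt_atTop 0] with k hk
    have : (n k : ℝ) ≠ 0 := by positivity
    have hr : 1 - x k / n k - y k / n k + 0 = 1 - (x k + y k) / n k := by ring
    rw [jointAtMostOneDeriv, hr]
    generalize 1 - (x k + y k) / n k = r
    field_simp
    ring

theorem tendsto_jointRemainder (hn : Tendsto n l atTop) (hx : Tendsto x l (𝓝 x₀))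
    (hy : Tendsto y l (𝓝 y₀)) (hz : Tendsto z l (𝓝 z₀)) :
    Tendsto (fun k => jointRemainder (n k) (x k / n k) (y k / n k) (z k / n k)) l
      (𝓝 (poissonRemainder x₀ y₀ z₀)) := by
  have T := ((tendsto_jointAtMostOne hn hx hy hz).sub
    (tendsto_jointAtMostOne hn hx hy (tendsto_const_nhds (x := 0)))).sub
      (hz.mul (tendsto_jointAtMostOneDeriv_zero hn hx hy))
  convert T.congr fun k => ?_ using 2
  · have : Real.exp (-(x₀ + y₀ - z₀)) = Real.exp (-(x₀ + y₀)) * Real.exp z₀ := by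
      rw [← Real.exp_add]; ring_nf
    rw [poissonRemainder, this, sub_zero]
    ring
  · rw [jointRemainder, zero_div]
    ring

theorem tendsto_mul_jointRemainder_mul (hn : Tendsto n l atTop) (hx : Tendsto x l (𝓝 x₀))
    (hy : Tendsto y l (𝓝 y₀)) (hy0 : ∀ᶠ k in l, 0 ≤ y k) (hyx : ∀ᶠ k in l, y k ≤ x k) :
    Tendsto (fun k => n k * jointRemainder (n k) (x k / n k) (y k / n k) (x k / n k * (y k / n k)))
      l (𝓝 0) := by
  have hnR : Tendsto (fun k => (n k : ℝ)) l atTop := tendsto_natCast_atTop_atTop.comp hn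
  have bound_lim : Tendsto
      (fun k => Real.exp 4 * decayEnvelope (x k) * (x k * y k) ^ 2 * (n k : ℝ)⁻¹) l (𝓝 0) := by
    have henv : Continuous decayEnvelope := by unfold decayEnvelope; fun_prop
    simpa using ((((henv.tendsto _).comp hx).const_mul (Real.exp 4)).mul ((hx.mul hy).pow 2)).mul
      hnR.inv_tendsto_atTop
  have small : ∀ᶠ k in l, (x k + y k) / n k < 1 :=
    ((hx.add hy).div_atTop hnR).eventually_lt_const one_pos
  refine squeeze_zero_norm' ?_ bound_lim
  filter_upwards [small, hn.eventually_ge_atTop 4, hy0, hyx] with k hk hk4 hyk hyxk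
  have hnk : (0 : ℝ) < n k := by positivity
  have hxk : 0 ≤ x k := hyk.trans hyxk
  have hsum : x k / n k + y k / n k ≤ 1 := by rw [← add_div]; exact hk.le
  have hyn : 0 ≤ y k / n k := by positivity
  have h := abs_jointRemainder_le hk4 (by positivity : 0 ≤ x k / n k * (y k / n k))
    (mul_le_of_le_one_left hyn (by linarith)) (by gcongr) hsum
  rw [norm_mul, Real.norm_natCast, Real.norm_eq_abs]
  refine (mul_le_mul_of_nonneg_left h hnk.le).trans_eq ?_
  rw [mul_div_cancel₀ _ hnk.ne']
  field_simp

end PoissonLimit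

/-! ### The limit series -/

/-- The `m`-th term of the expansion of `poissonRemainder`: conditionally on `m` trials in which
both events occur. -/
noncomputable def poissonTerm (x y z : ℝ) (m : ℕ) : ℝ :=
  Real.exp (-(x + y)) * (z ^ m / m.factorial) * ((1 + x - m) * (1 + y - m))

section PoissonTerm

variable {x y z : ℝ}

theorem hasSum_pow_div_factorial (z : ℝ) :
    HasSum (fun m : ℕ => z ^ m / m.factorial) (Real.exp z) := by
  rw [Real.exp_eq_exp_ℝ]
  exact NormedSpace.expSeries_div_hasSum_exp z

theorem hasSum_natCast_mul_pow_div_factorial {f : ℕ → ℝ} {s : ℝ}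
    (h : HasSum (fun m => f (m + 1) * (z ^ m / m.factorial)) s) :
    HasSum (fun m : ℕ => m * f m * (z ^ m / m.factorial)) (z * s) := by
  rw [← hasSum_nat_add_iff' 1]
  convert! h.mul_left z using 1
  · ext m
    rw [Nat.factorial_succ]
    push_cast
    field_simp
    ring
  · simp

theorem hasSum_poissonTerm (x y z : ℝ) :
    HasSum (fun m => poissonTerm x y z (m + 2)) (poissonRemainder x y z) := by
  have h₀ := hasSum_pow_div_factorial z
  have h₁ := hasSum_natCast_mul_pow_div_factorial (f := fun _ => 1) (by simpa using h₀)
  have h₂ := hasSum_natCast_mul_pow_div_factorial (f := fun m => m)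
    ((h₁.add h₀).congr_fun fun m => by push_cast; ring)
  have h : HasSum (poissonTerm x y z) (Real.exp (-(x + y)) * ((1 + x) * (1 + y) * Real.exp z
      - (2 + x + y) * (z * Real.exp z) + z * (z * Real.exp z + Real.exp z))) := by
    convert! ((((h₀.mul_left ((1 + x) * (1 + y))).sub (h₁.mul_left (2 + x + y))).add h₂).mul_left
      (Real.exp (-(x + y)))) using 1
    ext m
    rw [poissonTerm]
    ring
  rw [← hasSum_nat_add_iff' 2] at h
  convert! h using 1
  simp only [Finset.sum_range_succ, Finset.sum_range_zero, poissonTerm, poissonRemainder]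
  norm_num
  ring

theorem abs_one_add_sub_natCast_le {w : ℝ} (hw : 0 ≤ w) (m : ℕ) :
    |1 + w - ((m + 2 : ℕ) : ℝ)| ≤ (1 + w) * (m + 1) := by
  have : (0 : ℝ) ≤ m := m.cast_nonneg
  push_cast
  rw [abs_le]
  constructor <;> nlinarith

theorem abs_poissonTerm_le (hx : 0 ≤ x) (hy : 0 ≤ y) (hz : 0 ≤ z) (m : ℕ) :
    |poissonTerm x y z (m + 2)| ≤
      Real.exp (-(x + y)) * (z ^ 2 * ((1 + x) * (1 + y))) * (z ^ m / m.factorial) := by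
  have hfact : (((m + 2).factorial : ℕ) : ℝ) = (m + 2) * (m + 1) * m.factorial := by
    rw [Nat.factorial_succ, Nat.factorial_succ]; push_cast; ring
  have ratio_le : ((m : ℝ) + 1) / (m + 2) ≤ 1 := by
    rw [div_le_one (by positivity)]; linarith
  have hx' := abs_one_add_sub_natCast_le hx m
  have hy' := abs_one_add_sub_natCast_le hy m
  rw [poissonTerm, abs_mul, abs_mul, Real.abs_exp, abs_mul (1 + x - _),
    abs_of_nonneg (a := z ^ (m + 2) / _) (by positivity), hfact]
  calc _ ≤ Real.exp (-(x + y)) * (z ^ (m + 2) / ((m + 2) * (m + 1) * m.factorial)) *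
        ((1 + x) * (m + 1) * ((1 + y) * (m + 1))) := by gcongr
    _ = Real.exp (-(x + y)) * (z ^ 2 * ((1 + x) * (1 + y))) * (z ^ m / m.factorial) *
        ((m + 1) / (m + 2)) := by
        field_simp
        ring
    _ ≤ _ := mul_le_of_le_one_right (by positivity) ratio_le

theorem summable_abs_poissonTerm (hx : 0 ≤ x) (hy : 0 ≤ y) (hz : 0 ≤ z) :
    Summable fun m => |poissonTerm x y z (m + 2)| :=
  .of_nonneg_of_le (fun _ => abs_nonneg _) (abs_poissonTerm_le hx hy hz)
    ((hasSum_pow_div_factorial z).summable.mul_left _)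

theorem tsum_abs_poissonTerm_le (hz : 0 ≤ z) (hzy : z ≤ y) (hyx : y ≤ x) :
    ∑' m, |poissonTerm x y z (m + 2)| ≤ z ^ 2 * decayEnvelope x := by
  have hy : 0 ≤ y := hz.trans hzy
  have hx : 0 ≤ x := hy.trans hyx
  have h := ((hasSum_pow_div_factorial z).mul_left
    (Real.exp (-(x + y)) * (z ^ 2 * ((1 + x) * (1 + y)))))
  calc _ ≤ Real.exp (-(x + y)) * (z ^ 2 * ((1 + x) * (1 + y))) * Real.exp z :=
        h.tsum_eq ▸ (summable_abs_poissonTerm hx hy hz).tsum_le_tsum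
          (abs_poissonTerm_le hx hy hz) h.summable
    _ = Real.exp (-(x + y) + z) * (z ^ 2 * ((1 + x) * (1 + y))) := by rw [Real.exp_add]; ring
    _ ≤ Real.exp (-x) * (z ^ 2 * ((1 + x) * (1 + x))) := by gcongr; linarith
    _ = z ^ 2 * decayEnvelope x := by rw [decayEnvelope]; ring

theorem abs_poissonRemainder_le (hz : 0 ≤ z) (hzy : z ≤ y) (hyx : y ≤ x) :
    |poissonRemainder x y z| ≤ z ^ 2 * decayEnvelope x := by
  have hy : 0 ≤ y := hz.trans hzy
  have h := summable_abs_poissonTerm (hy.trans hyx) hy hz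
  calc |poissonRemainder x y z| = ‖∑' m, poissonTerm x y z (m + 2)‖ := by
        rw [(hasSum_poissonTerm x y z).tsum_eq, Real.norm_eq_abs]
    _ ≤ ∑' m, ‖poissonTerm x y z (m + 2)‖ := norm_tsum_le_tsum_norm h
    _ ≤ z ^ 2 * decayEnvelope x := tsum_abs_poissonTerm_le hz hzy hyx

end PoissonTerm

/-- The shape of a pair of words: `(k, e, d)` stands for words of lengths `k` and `k + e` whose
paths separate after `k - d` nodes. The length `k` is an integer because, in the limit, levels are
counted from level `log_A n`. -/
abbrev LevelIndex := ℤ × ℕ × ℕ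

namespace LevelIndex

/-- The length of the shorter word. -/
def shallow (i : LevelIndex) : ℤ := i.1

/-- The length of the longer word. -/
def deep (i : LevelIndex) : ℤ := i.1 + i.2.1

/-- The number of nodes visited by the two words together. -/
def joint (i : LevelIndex) : ℤ := i.1 + i.2.1 + i.2.2

/-- Translation of all levels by `k`. -/
def shift (k : ℤ) : LevelIndex ≃ LevelIndex := (Equiv.addRight k).prodCongr (Equiv.refl _)

variable (k : ℤ) (i : LevelIndex)

theorem shallow_le_deep : i.shallow ≤ i.deep := by unfold shallow deep; omega

theorem deep_le_joint : i.deep ≤ i.joint := by unfold deep joint; omega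

theorem shallow_shift : (shift k i).shallow = i.shallow + k := rfl

theorem deep_shift : (shift k i).deep = i.deep + k := add_right_comm _ _ _

theorem joint_shift : (shift k i).joint = i.joint + k := by
  change i.1 + k + i.2.1 + i.2.2 = i.1 + i.2.1 + i.2.2 + k
  ring

end LevelIndex

/-- The multiplicity of `e`: an ordered pair of words and its swap have the same shape. -/
noncomputable def symmWeight (e : ℕ) : ℝ := if e = 0 then 1 else 2

/-- The proportion, among the `b ^ d` continuations of length `d` of a path, of those which differ
from a given one at the first step. -/
noncomputable def branchWeight (b : ℝ) (d : ℕ) : ℝ := if d = 0 then 1 else 1 - 1 / b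

/-- The total weight of a shape: there are `pairWeight b i * b ^ i.joint` pairs of node paths of
shape `i` in the `b`-ary tree. -/
noncomputable def pairWeight (b : ℝ) (i : LevelIndex) : ℝ :=
  symmWeight i.2.1 * branchWeight b i.2.2

/-- The contribution of the shape `i` to `limitVariance`. -/
noncomputable def limitTerm (b a t : ℝ) (i : LevelIndex) : ℝ :=
  pairWeight b i * ((b * a) ^ i.joint *
    poissonRemainder (t * a ^ (-i.shallow)) (t * a ^ (-i.deep)) (t * a ^ (-i.joint)))

/-- The function of `t` to which the variance of the trie size is asymptotic at `t = n`, when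
`b` is the arity and `a` the size of the alphabet. -/
noncomputable def limitVariance (b a t : ℝ) : ℝ := ∑' i, limitTerm b a t i

/-- A bound for the contribution of the shape `i`, valid before and in the limit. -/
noncomputable def termEnvelope (b a t : ℝ) (i : LevelIndex) : ℝ :=
  pairWeight b i * ((b * a) ^ i.joint *
    ((t * a ^ (-i.joint)) ^ 2 * decayEnvelope (t * a ^ (-i.shallow))))

/-- A summable bound for `termEnvelope`, uniform for `t` in a compact subset of `(0, ∞)`. -/
noncomputable def levelMajorant (b a : ℝ) (i : LevelIndex) : ℝ :=
  (b / a) ^ i.joint * min 1 (a ^ (2 * i.shallow))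

theorem symmWeight_nonneg (e : ℕ) : 0 ≤ symmWeight e := by
  unfold symmWeight; split_ifs <;> norm_num

theorem symmWeight_le_two (e : ℕ) : symmWeight e ≤ 2 := by
  unfold symmWeight; split_ifs <;> norm_num

theorem mul_zpow_neg_add_natCast {a : ℝ} (ha : a ≠ 0) (t : ℝ) (k : ℕ) (j : ℤ) :
    t * a ^ k * a ^ (-(j + k)) = t * a ^ (-j) := by
  rw [neg_add, zpow_add₀ ha, zpow_neg a (k : ℤ), zpow_natCast]
  field_simp

section Weights

variable {b : ℝ}

theorem branchWeight_nonneg (hb : 1 ≤ b) (d : ℕ) : 0 ≤ branchWeight b d := by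
  have : 1 / b ≤ 1 := by rw [div_le_one (by linarith)]; exact hb
  unfold branchWeight
  split_ifs <;> linarith

theorem branchWeight_le_one (hb : 1 ≤ b) (d : ℕ) : branchWeight b d ≤ 1 := by
  have : 0 ≤ 1 / b := by positivity
  unfold branchWeight
  split_ifs <;> linarith

theorem pairWeight_nonneg (hb : 1 ≤ b) (i : LevelIndex) : 0 ≤ pairWeight b i :=
  mul_nonneg (symmWeight_nonneg _) (branchWeight_nonneg hb _)

theorem pairWeight_le_two (hb : 1 ≤ b) (i : LevelIndex) : pairWeight b i ≤ 2 := by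
  have := symmWeight_nonneg i.2.1
  calc pairWeight b i ≤ symmWeight i.2.1 := mul_le_of_le_one_right this (branchWeight_le_one hb _)
    _ ≤ 2 := symmWeight_le_two _

end Weights

section LimitVariance

variable {b a : ℝ}

theorem summable_zpow_mul_min (hb : 1 ≤ b) (hba : b < a) :
    Summable fun k : ℤ => (b / a) ^ k * min 1 (a ^ (2 * k)) := by
  have : 0 < b := by linarith
  have ha : 0 < a := by linarith
  refine .of_nat_of_neg ?_ ?_
  · refine .of_nonneg_of_le (fun n => by positivity) (fun n => ?_)
      (summable_geometric_of_lt_one (by positivity) ((div_lt_one ha).2 hba))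
    exact mul_le_of_le_one_right (by positivity) (min_le_left _ _)
  · have hlt : (b * a)⁻¹ < 1 := inv_lt_one_of_one_lt₀ (by nlinarith)
    refine .of_nonneg_of_le (fun n => by positivity) (fun n => ?_)
      (summable_geometric_of_lt_one (by positivity) hlt)
    calc _ ≤ (b / a) ^ (-(n : ℤ)) * a ^ (2 * -(n : ℤ)) := by gcongr; exact min_le_right _ _
      _ = ((b * a)⁻¹) ^ n := by
        rw [zpow_mul, ← mul_zpow, zpow_neg, zpow_natCast, ← inv_pow, zpow_ofNat]
        congr 1
        field_simp

theorem summable_levelMajorant (hb : 1 ≤ b) (hba : b < a) : Summable (levelMajorant b a) := by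
  have : 0 < b := by linarith
  have ha : 0 < a := by linarith
  have hr0 : 0 < b / a := by positivity
  have hgeo : Summable fun e : ℕ => (b / a) ^ e :=
    summable_geometric_of_lt_one hr0.le ((div_lt_one ha).2 hba)
  have h := (summable_zpow_mul_min hb hba).mul_of_nonneg (hgeo.mul_of_nonneg hgeo
    (fun _ => by positivity) fun _ => by positivity) (fun _ => by positivity)
      fun _ => by positivity
  refine h.congr fun i => ?_
  rw [levelMajorant, LevelIndex.joint, LevelIndex.shallow, zpow_add₀ hr0.ne', zpow_add₀ hr0.ne',
    zpow_natCast, zpow_natCast]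
  ring

theorem decayEnvelope_mul_zpow_le {t₀ t : ℝ} (ha : 0 < a) (ht₀ : 0 < t₀) (ht : t₀ ≤ t) (k : ℤ) :
    decayEnvelope (t * a ^ (-k)) ≤ 24 * Real.exp 1 * (1 + t₀⁻¹ ^ 2) * min 1 (a ^ (2 * k)) := by
  have htp : 0 < t := by linarith
  have hx : 0 < t * a ^ (-k) := by positivity
  rw [mul_min_of_nonneg _ _ (by positivity), mul_one]
  refine le_min ((decayEnvelope_le hx.le).trans ?_) ?_
  · exact le_mul_of_one_le_right (by positivity) (le_add_of_nonneg_right (by positivity))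
  · calc decayEnvelope (t * a ^ (-k))
        = decayEnvelope (t * a ^ (-k)) * (t * a ^ (-k)) ^ 2 * (t⁻¹ ^ 2 * a ^ (2 * k)) := by
          rw [mul_comm 2 k, zpow_mul, zpow_neg]
          field_simp
      _ ≤ 24 * Real.exp 1 * ((1 + t₀⁻¹ ^ 2) * a ^ (2 * k)) := by
          refine mul_le_mul (decayEnvelope_mul_sq_le hx.le) ?_ (by positivity) (by positivity)
          gcongr
          exact (pow_le_pow_left₀ (by positivity) (inv_anti₀ ht₀ ht) 2).trans
              (le_add_of_nonneg_left zero_le_one)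
      _ = _ := by ring

theorem exists_termEnvelope_le {t₀ : ℝ} (hb : 1 ≤ b) (hba : b < a) (ht₀ : 0 < t₀) (t₁ : ℝ) :
    ∃ C, ∀ t ∈ Set.Icc t₀ t₁, ∀ i, termEnvelope b a t i ≤ C * levelMajorant b a i := by
  have : 0 < b := by linarith
  have ha : 0 < a := by linarith
  refine ⟨2 * (t₁ ^ 2 * (24 * Real.exp 1 * (1 + t₀⁻¹ ^ 2))), fun t ht i => ?_⟩
  have htp : 0 < t := ht₀.trans_le ht.1
  have joint_scaling : (b * a) ^ i.joint * (t * a ^ (-i.joint)) ^ 2 =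
      t ^ 2 * (b / a) ^ i.joint := by
    rw [mul_pow, mul_zpow, div_zpow, zpow_neg]
    field_simp
  have := decayEnvelope_nonneg (t * a ^ (-i.shallow))
  calc termEnvelope b a t i
      = pairWeight b i * ((b * a) ^ i.joint * (t * a ^ (-i.joint)) ^ 2
          * decayEnvelope (t * a ^ (-i.shallow))) := by rw [termEnvelope]; ring
    _ ≤ 2 * (t₁ ^ 2 * (b / a) ^ i.joint
          * (24 * Real.exp 1 * (1 + t₀⁻¹ ^ 2) * min 1 (a ^ (2 * i.shallow)))) := by
        rw [joint_scaling]
        gcongr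
        · exact pairWeight_le_two hb i
        · exact ht.2
        · exact decayEnvelope_mul_zpow_le ha ht₀ ht.1 _
    _ = _ := by rw [levelMajorant]; ring

theorem termEnvelope_shift (hb : b ≠ 0) (ha : a ≠ 0) (t : ℝ) (k : ℕ) (i : LevelIndex) :
    termEnvelope b a (t * a ^ k) (.shift k i) = (b * a) ^ k * termEnvelope b a t i := by
  rw [termEnvelope, LevelIndex.joint_shift, LevelIndex.shallow_shift,
    mul_zpow_neg_add_natCast ha, mul_zpow_neg_add_natCast ha, zpow_add₀ (mul_ne_zero hb ha),
    zpow_natCast, termEnvelope, show pairWeight b (.shift k i) = pairWeight b i from rfl]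
  ring

theorem limitTerm_shift (hb : b ≠ 0) (ha : a ≠ 0) (t : ℝ) (k : ℕ) (i : LevelIndex) :
    limitTerm b a (t * a ^ k) (.shift k i) = (b * a) ^ k * limitTerm b a t i := by
  rw [limitTerm, LevelIndex.joint_shift, LevelIndex.shallow_shift, LevelIndex.deep_shift,
    mul_zpow_neg_add_natCast ha, mul_zpow_neg_add_natCast ha, mul_zpow_neg_add_natCast ha,
    zpow_add₀ (mul_ne_zero hb ha), zpow_natCast, limitTerm,
    show pairWeight b (.shift k i) = pairWeight b i from rfl]
  ring

theorem abs_limitTerm_le {t : ℝ} (hb : 1 ≤ b) (ha : 1 ≤ a) (ht : 0 ≤ t) (i : LevelIndex) :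
    |limitTerm b a t i| ≤ termEnvelope b a t i := by
  have hjd : t * a ^ (-i.joint) ≤ t * a ^ (-i.deep) := by
    gcongr
    exact i.deep_le_joint
  have hds : t * a ^ (-i.deep) ≤ t * a ^ (-i.shallow) := by
    gcongr
    exact i.shallow_le_deep
  have hpair := pairWeight_nonneg hb i
  have h := abs_poissonRemainder_le (by positivity) hjd hds
  have := decayEnvelope_nonneg (t * a ^ (-i.shallow))
  rw [limitTerm, termEnvelope, abs_mul, abs_mul, abs_of_nonneg hpair,
    abs_of_nonneg (a := (b * a) ^ i.joint) (by positivity)]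
  gcongr

theorem summable_termEnvelope {t : ℝ} (hb : 1 ≤ b) (hba : b < a) (ht : 0 < t) :
    Summable (termEnvelope b a t) := by
  have : 0 < a := by linarith
  obtain ⟨C, hC⟩ := exists_termEnvelope_le hb hba ht t
  refine .of_nonneg_of_le (fun i => ?_) (hC t ⟨le_rfl, le_rfl⟩)
    ((summable_levelMajorant hb hba).mul_left C)
  exact (abs_nonneg _).trans (abs_limitTerm_le hb (hb.trans hba.le) ht.le i)

theorem continuousOn_limitVariance (hb : 1 ≤ b) (hba : b < a) :
    ContinuousOn (limitVariance b a) (Set.Ioi 0) := by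
  intro t ht
  rw [Set.mem_Ioi] at ht
  obtain ⟨C, hC⟩ := exists_termEnvelope_le hb hba (half_pos ht) (2 * t)
  have h : ContinuousOn (limitVariance b a) (Set.Icc (t / 2) (2 * t)) := by
    refine continuousOn_tsum (u := fun i => C * levelMajorant b a i) (fun i => ?_)
      ((summable_levelMajorant hb hba).mul_left C) fun i s hs => ?_
    · unfold limitTerm poissonRemainder
      fun_prop
    · exact (abs_limitTerm_le hb (hb.trans hba.le) ((half_pos ht).le.trans hs.1) i).trans
        (hC s hs i)
  exact (h.continuousAt (Icc_mem_nhds (by linarith) (by linarith))).continuousWithinAt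

theorem limitVariance_mul_pow (hb : b ≠ 0) (ha : a ≠ 0) (t : ℝ) (k : ℕ) :
    limitVariance b a (t * a ^ k) = (b * a) ^ k * limitVariance b a t := by
  unfold limitVariance
  rw [← tsum_mul_left, ← (LevelIndex.shift k).tsum_eq]
  simp_rw [limitTerm_shift hb ha]

end LimitVariance

/-! ### A quadratic form on levels -/

/-- The growth condition `g k = O(β ^ k)`, uniformly in `k : ℤ`, for every `β > 1`: at `+∞` the
function `g` grows slower, and at `-∞` it decays faster, than every geometric sequence. -/
def HasSubgeometricGrowth (g : ℤ → ℝ) : Prop := ∀ β > 1, ∃ C, ∀ k, |g k| ≤ C * β ^ k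

/-- The summation operator `g ↦ (K ↦ ∑ k ≤ K, g k)` on functions on `ℤ`. -/
noncomputable def backwardSum (g : ℤ → ℝ) (K : ℤ) : ℝ := ∑' e : ℕ, g (K - e)

section BackwardSum

variable {g : ℤ → ℝ}

theorem abs_sub_natCast_le {β C : ℝ} (hβ : 1 < β) (hg : ∀ k, |g k| ≤ C * β ^ k) (K : ℤ) (e : ℕ) :
    |g (K - e)| ≤ C * β ^ K * β⁻¹ ^ e := by
  have hβ0 : β ≠ 0 := by positivity
  refine (hg _).trans_eq ?_
  rw [zpow_sub₀ hβ0, zpow_natCast, inv_pow]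
  ring

theorem HasSubgeometricGrowth.summable_sub_natCast (hg : HasSubgeometricGrowth g) (K : ℤ) :
    Summable fun e : ℕ => g (K - e) := by
  obtain ⟨C, hC⟩ := hg 2 one_lt_two
  exact .of_norm_bounded ((summable_geometric_of_lt_one (by norm_num) (by norm_num)).mul_left _)
    (abs_sub_natCast_le one_lt_two hC K)

protected theorem HasSubgeometricGrowth.backwardSum (hg : HasSubgeometricGrowth g) :
    HasSubgeometricGrowth (backwardSum g) := by
  intro β hβ
  obtain ⟨C, hC⟩ := hg β hβ
  refine ⟨C * (1 - β⁻¹)⁻¹, fun K => ?_⟩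
  have geometric := hasSum_geometric_of_lt_one (by positivity) (inv_lt_one_of_one_lt₀ hβ)
  rw [mul_right_comm]
  exact tsum_of_norm_bounded (f := fun e : ℕ => g (K - e)) (geometric.mul_left _)
    (abs_sub_natCast_le hβ hC K)

theorem backwardSum_eq_add (hg : HasSubgeometricGrowth g) (K : ℤ) :
    backwardSum g K = g K + backwardSum g (K - 1) := by
  rw [backwardSum, (hg.summable_sub_natCast K).tsum_eq_zero_add, backwardSum]
  congr 1
  · simp
  · refine tsum_congr fun e => congrArg g ?_
    push_cast
    ring

theorem hasSum_symmWeight_mul (hg : HasSubgeometricGrowth g) (K : ℤ) :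
    HasSum (fun e => symmWeight e * g (K - e))
      (backwardSum g K + backwardSum g (K - 1)) := by
  have h := ((hg.summable_sub_natCast K).hasSum.mul_left 2).sub (hasSum_ite_eq 0 (g K))
  convert! h using 1
  · ext e
    obtain rfl | he := eq_or_ne e 0
    · simp only [symmWeight]; norm_num; ring
    · simp [symmWeight, he]
  · have := backwardSum_eq_add hg K
    rw [← backwardSum]
    linarith

theorem HasSubgeometricGrowth.summable_zpow_mul_sq {θ : ℝ} (hg : HasSubgeometricGrowth g)
    (hθ : 0 < θ) (hθ' : θ < 1) : Summable fun K : ℤ => θ ^ K * g K ^ 2 := by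
  have term_le {β C : ℝ} (hC : ∀ k, |g k| ≤ C * β ^ k) (K : ℤ) :
      θ ^ K * g K ^ 2 ≤ C ^ 2 * (θ * β ^ 2) ^ K := by
    calc θ ^ K * g K ^ 2 = θ ^ K * |g K| ^ 2 := by rw [sq_abs]
      _ ≤ θ ^ K * (C * β ^ K) ^ 2 := by gcongr; exact hC K
      _ = C ^ 2 * (θ * β ^ 2) ^ K := by
        rw [mul_zpow, ← zpow_natCast β, zpow_comm β, zpow_natCast]
        ring
  obtain ⟨c, hc, hc'⟩ := exists_between ((one_lt_inv₀ hθ).2 hθ')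
  obtain ⟨C, hC⟩ := hg (√c) (Real.lt_sqrt_of_sq_lt (by simpa using hc))
  obtain ⟨C', hC'⟩ := hg θ⁻¹ ((one_lt_inv₀ hθ).2 hθ')
  refine .of_nat_of_neg ?_ ?_
  · refine .of_nonneg_of_le (fun n => by positivity) (fun n => term_le hC n) (.mul_left _ ?_)
    rw [Real.sq_sqrt (by linarith)]
    exact summable_geometric_of_lt_one (by positivity) ((lt_inv_mul_iff₀ hθ).1 (by rwa [mul_one]))
  · refine .of_nonneg_of_le (fun n => by positivity) (fun n => term_le hC' (-n)) (.mul_left _ ?_)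
    refine (summable_geometric_of_lt_one hθ.le hθ').congr fun n => ?_
    rw [zpow_neg, zpow_natCast, ← inv_pow]
    congr 1
    field_simp

theorem tsum_zpow_mul_mul_backwardSum {θ : ℝ} (hg : HasSubgeometricGrowth g)
    (hθ : 0 < θ) (hθ' : θ < 1) :
    ∑' K : ℤ, θ ^ K * (g K * (backwardSum g K + backwardSum g (K - 1))) =
      (1 - θ) * ∑' K : ℤ, θ ^ K * backwardSum g K ^ 2 := by
  have h := hg.backwardSum.summable_zpow_mul_sq hθ hθ'
  have h' : HasSum (fun K : ℤ => θ ^ K * backwardSum g (K - 1) ^ 2)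
      (θ * ∑' K : ℤ, θ ^ K * backwardSum g K ^ 2) := by
    rw [← (Equiv.addRight (1 : ℤ)).hasSum_iff]
    convert! h.hasSum.mul_left θ using 1
    ext K
    simp only [Function.comp_apply, Equiv.coe_addRight, add_sub_cancel_right, zpow_add_one₀ hθ.ne']
    ring
  rw [one_sub_mul, ← (h.hasSum.sub h').tsum_eq]
  refine tsum_congr fun K => ?_
  rw [backwardSum_eq_add hg K]
  ring

end BackwardSum

/-- The change of variables from the length of the shorter word to that of the longer one. -/
def LevelIndex.deepEquiv : LevelIndex ≃ ℤ × ℕ × ℕ where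
  toFun i := (i.deep, i.2)
  invFun j := (j.1 - j.2.1, j.2)
  left_inv i := by simp [LevelIndex.deep]
  right_inv j := by simp [LevelIndex.deep]

section QuadraticForm

variable {b θ : ℝ} {g : ℤ → ℝ}

theorem summable_branchWeight_mul_pow (hb : 1 ≤ b) (hθ : 0 ≤ θ) (hθ' : θ < 1) :
    Summable fun d => branchWeight b d * θ ^ d :=
  .of_nonneg_of_le (fun d => mul_nonneg (branchWeight_nonneg hb d) (by positivity))
    (fun d => mul_le_of_le_one_left (by positivity) (branchWeight_le_one hb d))
    (summable_geometric_of_lt_one hθ hθ')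

/-- The quadratic form in `g` which gives the coefficients of the power series expansion of
`limitVariance` in its third argument. -/
noncomputable def levelForm (b θ : ℝ) (g : ℤ → ℝ) (i : LevelIndex) : ℝ :=
  pairWeight b i * (θ ^ i.joint * (g i.shallow * g i.deep))

theorem tsum_levelForm (hb : 1 ≤ b) (hθ : 0 < θ) (hθ' : θ < 1) (hg : HasSubgeometricGrowth g)
    (hsum : Summable (levelForm b θ g)) :
    ∑' i, levelForm b θ g i = (∑' d, branchWeight b d * θ ^ d) *
      ((1 - θ) * ∑' K : ℤ, θ ^ K * backwardSum g K ^ 2) := by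
  have separated (K : ℤ) (c : ℕ × ℕ) : levelForm b θ g (LevelIndex.deepEquiv.symm (K, c)) =
      θ ^ K * g K * (symmWeight c.1 * g (K - c.1) * (branchWeight b c.2 * θ ^ c.2)) := by
    simp only [levelForm, pairWeight, LevelIndex.deepEquiv, LevelIndex.shallow, LevelIndex.deep,
      LevelIndex.joint, Equiv.coe_fn_symm_mk, sub_add_cancel, zpow_add₀ hθ.ne', zpow_natCast]
    ring
  have hsum' : Summable fun j => levelForm b θ g (LevelIndex.deepEquiv.symm j) :=
    LevelIndex.deepEquiv.symm.summable_iff.2 hsum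
  rw [← LevelIndex.deepEquiv.symm.tsum_eq, hsum'.tsum_prod]
  simp_rw [separated, tsum_mul_left]
  rw [← tsum_zpow_mul_mul_backwardSum hg hθ hθ', ← tsum_mul_left]
  refine tsum_congr fun K => ?_
  rw [← tsum_mul_tsum_of_summable_norm (hasSum_symmWeight_mul hg K).summable.norm
    (summable_branchWeight_mul_pow hb hθ.le hθ').norm, (hasSum_symmWeight_mul hg K).tsum_eq]
  ring

theorem tsum_levelForm_nonneg (hb : 1 ≤ b) (hθ : 0 < θ) (hθ' : θ < 1)
    (hg : HasSubgeometricGrowth g) (hsum : Summable (levelForm b θ g)) :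
    0 ≤ ∑' i, levelForm b θ g i := by
  have : 0 ≤ 1 - θ := by linarith
  have : 0 ≤ ∑' d, branchWeight b d * θ ^ d :=
    tsum_nonneg fun d => mul_nonneg (branchWeight_nonneg hb d) (by positivity)
  rw [tsum_levelForm hb hθ hθ' hg hsum]
  positivity

theorem tsum_levelForm_pos (hb : 1 ≤ b) (hθ : 0 < θ) (hθ' : θ < 1)
    (hg : HasSubgeometricGrowth g) (hsum : Summable (levelForm b θ g)) (hg0 : g ≠ 0) :
    0 < ∑' i, levelForm b θ g i := by
  obtain ⟨K, hK⟩ : ∃ K, backwardSum g K ≠ 0 := by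
    by_contra! h
    exact hg0 (funext fun k => by simpa [h] using (backwardSum_eq_add hg k).symm)
  have branch_pos : 0 < ∑' d, branchWeight b d * θ ^ d :=
    (summable_branchWeight_mul_pow hb hθ.le hθ').tsum_pos
      (fun d => mul_nonneg (branchWeight_nonneg hb d) (by positivity)) 0 (by simp [branchWeight])
  have level_pos : 0 < ∑' K : ℤ, θ ^ K * backwardSum g K ^ 2 :=
    (hg.backwardSum.summable_zpow_mul_sq hθ hθ').tsum_pos (fun _ => by positivity) K
      (by positivity)
  rw [tsum_levelForm hb hθ hθ' hg hsum]
  exact mul_pos branch_pos (mul_pos (by linarith) level_pos)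

end QuadraticForm

/-! ### Positivity of the limit series -/

/-- The factor of `poissonTerm x y z s` depending on `x` only, at `x = t * a ^ (-k)`. -/
noncomputable def levelProfile (a t s : ℝ) (k : ℤ) : ℝ :=
  Real.exp (-(t * a ^ (-k))) * (1 + t * a ^ (-k) - s)

/-- The `i.2`-th term of the expansion of the series `limitVariance b a t` into powers of `t`
(starting at `t ^ 2`) by means of `hasSum_poissonTerm`. -/
noncomputable def expansionTerm (b a t : ℝ) (i : LevelIndex × ℕ) : ℝ :=
  pairWeight b i.1 * ((b * a) ^ i.1.joint * poissonTerm (t * a ^ (-i.1.shallow))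
    (t * a ^ (-i.1.deep)) (t * a ^ (-i.1.joint)) (i.2 + 2))

theorem pow_mul_one_add_mul_exp_neg_le {x : ℝ} (hx : 0 ≤ x) (j : ℕ) :
    x ^ j * ((1 + x) * Real.exp (-x)) ≤ (j + 1).factorial * Real.exp 1 := by
  have h := Real.pow_div_factorial_le_exp (1 + x) (by positivity) (j + 1)
  rw [div_le_iff₀' (by positivity)] at h
  calc x ^ j * ((1 + x) * Real.exp (-x)) ≤ (1 + x) ^ j * ((1 + x) * Real.exp (-x)) := by
        gcongr
        linarith
    _ = (1 + x) ^ (j + 1) * Real.exp (-x) := by ring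
    _ ≤ (j + 1).factorial * Real.exp (1 + x) * Real.exp (-x) := by gcongr
    _ = (j + 1).factorial * Real.exp 1 := by
        rw [mul_assoc, ← Real.exp_add, add_neg_cancel_right]

theorem pow_mul_abs_levelProfile_le {a t s : ℝ} (ha : 0 < a) (ht : 0 ≤ t) (hs : 1 ≤ s) (j : ℕ)
    (k : ℤ) :
    (t * a ^ (-k)) ^ j * |levelProfile a t s k| ≤ s * ((j + 1).factorial * Real.exp 1) := by
  set x := t * a ^ (-k) with hx
  have hx0 : 0 ≤ x := by positivity
  have affine_le : |1 + x - s| ≤ s * (1 + x) := by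
    rw [abs_le]
    constructor <;> nlinarith
  calc x ^ j * |levelProfile a t s k| = x ^ j * (Real.exp (-x) * |1 + x - s|) := by
        rw [levelProfile, ← hx, abs_mul, Real.abs_exp]
    _ ≤ x ^ j * (Real.exp (-x) * (s * (1 + x))) := by gcongr
    _ = s * (x ^ j * ((1 + x) * Real.exp (-x))) := by ring
    _ ≤ _ := mul_le_mul_of_nonneg_left (pow_mul_one_add_mul_exp_neg_le hx0 j) (by linarith)

theorem hasSubgeometricGrowth_levelProfile {a t s : ℝ} (ha : 1 < a) (ht : 0 < t) (hs : 1 ≤ s) :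
    HasSubgeometricGrowth (levelProfile a t s) := by
  intro β hβ
  have ha0 : 0 < a := by linarith
  have : 0 < β := by linarith
  obtain ⟨j, hj⟩ := pow_unbounded_of_one_lt β ha
  have bound := pow_mul_abs_levelProfile_le ha0 ht.le hs
  refine ⟨s * ((0 + 1).factorial * Real.exp 1) ⊔
    s * ((j + 1).factorial * Real.exp 1) * (t ^ j)⁻¹, fun k => ?_⟩
  obtain ⟨n, rfl | rfl⟩ := k.eq_nat_or_neg
  · calc |levelProfile a t s n| ≤ s * ((0 + 1).factorial * Real.exp 1) := by
          simpa using bound 0 n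
      _ ≤ s * ((0 + 1).factorial * Real.exp 1) * β ^ n :=
          le_mul_of_one_le_right (by positivity) (one_le_pow₀ hβ.le)
      _ ≤ _ := by rw [zpow_natCast]; gcongr; exact le_max_left _ _
  · have h := bound j (-n)
    rw [neg_neg, zpow_natCast, ← le_div_iff₀' (by positivity)] at h
    calc |levelProfile a t s (-n)| ≤ s * ((j + 1).factorial * Real.exp 1) / (t * a ^ n) ^ j := h
      _ = s * ((j + 1).factorial * Real.exp 1) * (t ^ j)⁻¹ * ((a ^ j) ^ n)⁻¹ := by
          rw [mul_pow, pow_right_comm, div_eq_mul_inv, mul_inv]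
          ring
      _ ≤ s * ((j + 1).factorial * Real.exp 1) * (t ^ j)⁻¹ * (β ^ n)⁻¹ := by gcongr
      _ ≤ _ := by rw [zpow_neg, zpow_natCast]; gcongr; exact le_max_right _ _

section Expansion

variable {b a t : ℝ}

theorem expansionTerm_eq_mul_levelForm (ha : a ≠ 0) (i : LevelIndex) (m : ℕ) :
    expansionTerm b a t (i, m) = t ^ (m + 2) / (m + 2).factorial *
      levelForm b (b / a ^ (m + 1)) (levelProfile a t (m + 2)) i := by
  have joint_scaling : (b * a) ^ i.joint * (t * a ^ (-i.joint)) ^ (m + 2) =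
      t ^ (m + 2) * (b / a ^ (m + 1)) ^ i.joint := by
    have h : (a ^ i.joint) ^ (m + 1) = (a ^ (m + 1)) ^ i.joint := by
      rw [← zpow_natCast, ← zpow_natCast, zpow_comm]
    rw [mul_pow, mul_zpow, div_zpow, zpow_neg, inv_pow, pow_succ (a ^ i.joint), h]
    field_simp
  calc expansionTerm b a t (i, m)
      = (b * a) ^ i.joint * (t * a ^ (-i.joint)) ^ (m + 2) * (pairWeight b i / (m + 2).factorial *
          (levelProfile a t (m + 2) i.shallow * levelProfile a t (m + 2) i.deep)) := by
        rw [expansionTerm, poissonTerm, levelProfile, levelProfile, neg_add, Real.exp_add]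
        push_cast
        ring
    _ = _ := by rw [joint_scaling, levelForm]; ring

theorem hasSum_expansionTerm (i : LevelIndex) :
    HasSum (fun m => expansionTerm b a t (i, m)) (limitTerm b a t i) :=
  ((hasSum_poissonTerm _ _ _).mul_left _).mul_left _

theorem abs_expansionTerm (hb : 1 ≤ b) (ha : 1 ≤ a) (i : LevelIndex) (m : ℕ) :
    |expansionTerm b a t (i, m)| = pairWeight b i * ((b * a) ^ i.joint *
      |poissonTerm (t * a ^ (-i.shallow)) (t * a ^ (-i.deep)) (t * a ^ (-i.joint)) (m + 2)|) := by
  rw [expansionTerm, abs_mul, abs_mul, abs_of_nonneg (pairWeight_nonneg hb i),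
    abs_of_nonneg (a := (b * a) ^ i.joint) (by positivity)]

theorem summable_abs_expansionTerm (hb : 1 ≤ b) (ha : 1 ≤ a) (ht : 0 ≤ t) (i : LevelIndex) :
    Summable fun m => |expansionTerm b a t (i, m)| := by
  simp_rw [abs_expansionTerm hb ha]
  exact ((summable_abs_poissonTerm (by positivity) (by positivity)
    (by positivity)).mul_left _).mul_left _

theorem tsum_abs_expansionTerm_le (hb : 1 ≤ b) (ha : 1 ≤ a) (ht : 0 ≤ t) (i : LevelIndex) :
    ∑' m, |expansionTerm b a t (i, m)| ≤ termEnvelope b a t i := by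
  have hpair := pairWeight_nonneg hb i
  have hjd : t * a ^ (-i.joint) ≤ t * a ^ (-i.deep) := by
    gcongr
    exact i.deep_le_joint
  have hds : t * a ^ (-i.deep) ≤ t * a ^ (-i.shallow) := by
    gcongr
    exact i.shallow_le_deep
  simp_rw [abs_expansionTerm hb ha, tsum_mul_left, termEnvelope]
  gcongr
  exact tsum_abs_poissonTerm_le (by positivity) hjd hds

theorem summable_expansionTerm (hb : 1 ≤ b) (hba : b < a) (ht : 0 < t) :
    Summable (expansionTerm b a t) := by
  have ha : 1 ≤ a := by linarith
  refine .of_abs ((summable_prod_of_nonneg fun _ => abs_nonneg _).2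
    ⟨summable_abs_expansionTerm hb ha ht.le, ?_⟩)
  exact .of_nonneg_of_le (fun i => tsum_nonneg fun m => abs_nonneg _)
    (tsum_abs_expansionTerm_le hb ha ht.le) (summable_termEnvelope hb hba ht)

theorem hasSum_tsum_levelForm (hb : 1 ≤ b) (hba : b < a) (ht : 0 < t) :
    HasSum (fun m : ℕ => t ^ (m + 2) / (m + 2).factorial *
      ∑' i, levelForm b (b / a ^ (m + 1)) (levelProfile a t (m + 2)) i) (limitVariance b a t) := by
  have ha : a ≠ 0 := by linarith
  have h := summable_expansionTerm hb hba ht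
  have hswap : Summable (expansionTerm b a t ∘ Prod.swap) := (Equiv.prodComm _ _).summable_iff.2 h
  have total : ∑' i, expansionTerm b a t i = limitVariance b a t := by
    rw [h.tsum_prod]
    exact tsum_congr fun i => (hasSum_expansionTerm i).tsum_eq
  rw [← total, ← (Equiv.prodComm ℕ LevelIndex).tsum_eq]
  convert! hswap.hasSum.prod_fiberwise fun m => (hswap.prod_factor m).hasSum using 1
  ext m
  simp_rw [Function.comp_apply, Prod.swap_prod_mk, expansionTerm_eq_mul_levelForm ha,
    tsum_mul_left]

theorem summable_levelForm_levelProfile (hb : 1 ≤ b) (hba : b < a) (ht : 0 < t) (m : ℕ) :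
    Summable (levelForm b (b / a ^ (m + 1)) (levelProfile a t (m + 2))) := by
  have ha : a ≠ 0 := by linarith
  have h := (summable_expansionTerm hb hba ht).prod_symm.prod_factor m
  simp only [Prod.swap_prod_mk, expansionTerm_eq_mul_levelForm ha] at h
  exact (summable_mul_left_iff (by positivity)).1 h

theorem levelProfile_two_ne_zero (ha : 1 < a) (ht : 0 < t) : levelProfile a t 2 ≠ 0 := by
  intro h
  have h₀ := congrFun h 0
  have h₁ := congrFun h (-1)
  simp only [levelProfile, Pi.zero_apply, mul_eq_zero, Real.exp_ne_zero, false_or, neg_zero,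
    zpow_zero, neg_neg, zpow_one] at h₀ h₁
  nlinarith

theorem limitVariance_pos (hb : 1 ≤ b) (hba : b < a) (ht : 0 < t) : 0 < limitVariance b a t := by
  have ha : 1 < a := by linarith
  have hθ (m : ℕ) : 0 < b / a ^ (m + 1) := by positivity
  have hθ' (m : ℕ) : b / a ^ (m + 1) < 1 :=
    (div_lt_one (by positivity)).2 (hba.trans_le (le_self_pow₀ ha.le m.succ_ne_zero))
  have growth (m : ℕ) : HasSubgeometricGrowth (levelProfile a t (m + 2)) :=
    hasSubgeometricGrowth_levelProfile ha ht (by linarith [m.cast_nonneg (α := ℝ)])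
  have summable := summable_levelForm_levelProfile hb hba ht
  have h := hasSum_tsum_levelForm hb hba ht
  refine h.tsum_eq ▸ h.summable.tsum_pos (fun m => mul_nonneg (by positivity)
    (tsum_levelForm_nonneg hb (hθ m) (hθ' m) (growth m) (summable m))) 0
    (mul_pos (by positivity) (tsum_levelForm_pos hb (hθ 0) (hθ' 0) (growth 0) (summable 0) ?_))
  simpa using levelProfile_two_ne_zero ha ht

end Expansion

/-! ### Convergence to the limit series -/

/-- The contribution of the pairs of words of shape `i` to the variance of the size of the trie
built from `n` labelings. Shapes with `i.shallow ≤ i.2.2` belong to pairs of paths without a common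
node, for which the occurrences are uncorrelated. -/
noncomputable def varianceTerm (n : ℕ) (b a : ℝ) (i : LevelIndex) : ℝ :=
  if (i.2.2 : ℤ) < i.shallow then
    pairWeight b i * (b ^ i.joint *
      (a ^ i.joint * jointRemainder n (a ^ (-i.shallow)) (a ^ (-i.deep)) (a ^ (-i.joint)) -
        a ^ (i.shallow + i.deep) * jointRemainder n (a ^ (-i.shallow)) (a ^ (-i.deep))
          (a ^ (-i.shallow) * a ^ (-i.deep))))
  else 0

/-- The factor `t ∈ [1, A)` in the representation `n = t * A ^ k`, for `1 ≤ n`. -/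
noncomputable def mantissa (A n : ℕ) : ℝ := n / (A : ℝ) ^ Nat.log A n

section VarianceTerm

variable {a b : ℝ} {n : ℕ}

theorem abs_zpow_mul_jointRemainder_le {i : LevelIndex} {q : ℤ} (hn : 4 ≤ n) (ha : 2 ≤ a)
    (hi : 1 ≤ i.shallow) (hq : i.joint ≤ q) :
    |a ^ q * jointRemainder n (a ^ (-i.shallow)) (a ^ (-i.deep)) (a ^ (-q))| ≤
      Real.exp 4 * (a ^ i.joint * ((n * a ^ (-i.joint)) ^ 2 *
        decayEnvelope (n * a ^ (-i.shallow)))) := by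
  have ha1 : 1 ≤ a := by linarith
  have : 0 < a := by linarith
  have le_half {k : ℤ} (hk : 1 ≤ k) : a ^ (-k) ≤ 1 / 2 := by
    calc a ^ (-k) ≤ a ^ (-1 : ℤ) := zpow_le_zpow_right₀ ha1 (by omega)
      _ ≤ 1 / 2 := by rw [zpow_neg_one, ← one_div]; gcongr
  have hR := abs_jointRemainder_le (τ := a ^ (-q)) hn (by positivity)
    (zpow_le_zpow_right₀ ha1 (neg_le_neg (i.deep_le_joint.trans hq)))
    (zpow_le_zpow_right₀ ha1 (neg_le_neg i.shallow_le_deep))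
    (by linarith [le_half hi, le_half (hi.trans i.shallow_le_deep)])
  have := decayEnvelope_nonneg (n * a ^ (-i.shallow))
  calc _ = a ^ q * |jointRemainder n (a ^ (-i.shallow)) (a ^ (-i.deep)) (a ^ (-q))| := by
        rw [abs_mul, abs_of_pos (a := a ^ q) (by positivity)]
    _ ≤ a ^ q * (Real.exp 4 * n ^ 2 * decayEnvelope (n * a ^ (-i.shallow)) * (a ^ (-q)) ^ 2) := by
        gcongr
    _ = Real.exp 4 * (a ^ (-q) * (n ^ 2 * decayEnvelope (n * a ^ (-i.shallow)))) := by
        rw [zpow_neg a q]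
        field_simp
    _ ≤ Real.exp 4 * (a ^ (-i.joint) * (n ^ 2 * decayEnvelope (n * a ^ (-i.shallow)))) := by
        gcongr
    _ = _ := by
        rw [zpow_neg a i.joint]
        field_simp

theorem abs_varianceTerm_le (hn : 4 ≤ n) (hb : 1 ≤ b) (ha : 2 ≤ a) (i : LevelIndex) :
    |varianceTerm n b a i| ≤ 2 * Real.exp 4 * termEnvelope b a n i := by
  have hpair := pairWeight_nonneg hb i
  have ha0 : a ≠ 0 := by positivity
  have := decayEnvelope_nonneg (n * a ^ (-i.shallow))
  rw [varianceTerm, termEnvelope, mul_zpow]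
  split_ifs with h
  · have hi : 1 ≤ i.shallow := by omega
    have hq : i.joint ≤ i.shallow + i.deep := by
      unfold LevelIndex.joint LevelIndex.deep LevelIndex.shallow at *
      omega
    have h₁ := abs_zpow_mul_jointRemainder_le hn ha hi le_rfl
    have h₂ := abs_zpow_mul_jointRemainder_le hn ha hi hq
    rw [neg_add, zpow_add₀ ha0 (-i.shallow)] at h₂
    rw [abs_mul, abs_of_nonneg hpair, abs_mul, abs_of_nonneg (a := b ^ i.joint) (by positivity)]
    calc _ ≤ pairWeight b i * (b ^ i.joint * (_ + _)) := by
          gcongr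
          exact (abs_sub _ _).trans (add_le_add h₁ h₂)
      _ = _ := by ring
  · simp only [abs_zero]
    positivity

theorem varianceTerm_shift_div {i : LevelIndex} {K : ℕ} {t : ℝ} (hn : n ≠ 0) (hb : 0 < b)
    (ha : 0 < a) (ht : t = n / a ^ K) (hK : (i.2.2 : ℤ) < i.shallow + K) :
    varianceTerm n b a (.shift K i) / (b * a) ^ K = pairWeight b i * ((b * a) ^ i.joint *
      jointRemainder n (t * a ^ (-i.shallow) / n) (t * a ^ (-i.deep) / n) (t * a ^ (-i.joint) / n) -
      b ^ i.joint * a ^ (i.shallow + i.deep) * t⁻¹ * (n * jointRemainder n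
        (t * a ^ (-i.shallow) / n) (t * a ^ (-i.deep) / n)
          (t * a ^ (-i.shallow) / n * (t * a ^ (-i.deep) / n)))) := by
  have scaled (j : ℤ) : a ^ (-(j + K)) = t * a ^ (-j) / n := by
    rw [ht, neg_add, zpow_add₀ ha.ne', zpow_neg a (K : ℤ), zpow_natCast]
    field_simp
  rw [varianceTerm, LevelIndex.joint_shift, LevelIndex.shallow_shift, LevelIndex.deep_shift,
    if_pos (by exact hK), scaled, scaled, scaled, ht,
    show pairWeight b (.shift K i) = pairWeight b i from rfl,
    show i.shallow + K + (i.deep + K) = i.shallow + i.deep + K + K by ring]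
  simp only [mul_zpow, mul_pow, zpow_add₀ hb.ne', zpow_add₀ ha.ne', zpow_natCast]
  field_simp

end VarianceTerm

section Asymptotics

variable {A : ℕ} {b : ℝ}

theorem mantissa_mem_Icc (hA : 1 < A) {n : ℕ} (hn : n ≠ 0) : mantissa A n ∈ Set.Icc (1 : ℝ) A := by
  have : (0 : ℝ) < A := by positivity
  rw [mantissa, Set.mem_Icc, le_div_iff₀ (by positivity), div_le_iff₀ (by positivity), one_mul,
    ← pow_succ']
  exact_mod_cast And.intro (Nat.pow_log_le_self A hn) (Nat.lt_pow_succ_log_self hA n).le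

theorem mantissa_mul_pow_log (hA : A ≠ 0) (n : ℕ) : mantissa A n * A ^ Nat.log A n = n :=
  div_mul_cancel₀ _ (pow_ne_zero _ (Nat.cast_ne_zero.2 hA))

theorem tendsto_natLog_atTop (hA : 1 < A) : Tendsto (Nat.log A) atTop atTop :=
  tendsto_atTop.2 fun m => by
    filter_upwards [eventually_ge_atTop (A ^ m)] with n hn
    exact Nat.le_log_of_pow_le hA hn

theorem tendsto_varianceTerm_shift_div {l : Filter ℕ} {t₀ : ℝ} (hb : 0 < b) (hA : 1 < A)
    (hl : l ≤ atTop) (ht₀ : 0 < t₀) (ht : Tendsto (mantissa A) l (𝓝 t₀)) (i : LevelIndex) :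
    Tendsto (fun n => varianceTerm n b A (.shift (Nat.log A n) i) / (b * A) ^ Nat.log A n) l
      (𝓝 (limitTerm b A t₀ i)) := by
  have hA1 : (1 : ℝ) ≤ A := by exact_mod_cast hA.le
  have hn : Tendsto (fun n : ℕ => n) l atTop := hl
  have scaled (j : ℤ) : Tendsto (fun n => mantissa A n * (A : ℝ) ^ (-j)) l (𝓝 (t₀ * A ^ (-j))) :=
    ht.mul_const _
  have mantissa_nonneg (n : ℕ) : 0 ≤ mantissa A n := by unfold mantissa; positivity
  have correlated := tendsto_jointRemainder hn (scaled i.shallow) (scaled i.deep) (scaled i.joint)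
  have independent := tendsto_mul_jointRemainder_mul hn (scaled i.shallow) (scaled i.deep)
    (.of_forall fun n => mul_nonneg (mantissa_nonneg n) (by positivity))
    (.of_forall fun n => mul_le_mul_of_nonneg_left
      (zpow_le_zpow_right₀ hA1 (neg_le_neg i.shallow_le_deep)) (mantissa_nonneg n))
  have lim := ((correlated.const_mul ((b * A) ^ i.joint)).sub
    (((ht.inv₀ ht₀.ne').const_mul (b ^ i.joint * (A : ℝ) ^ (i.shallow + i.deep))).mul
      independent)).const_mul (pairWeight b i)
  rw [mul_zero, sub_zero] at lim
  have hlog := (tendsto_natLog_atTop hA).mono_left hl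
  refine lim.congr' ?_
  filter_upwards [hn.eventually_ne_atTop 0,
    (tendsto_natCast_atTop_atTop (R := ℤ).comp hlog).eventually_gt_atTop (i.2.2 - i.shallow)]
    with n hn0 hK
  exact (varianceTerm_shift_div hn0 hb (by positivity) rfl (sub_lt_iff_lt_add'.1 hK)).symm

theorem tendsto_tsum_varianceTerm_div {l : Filter ℕ} {t₀ : ℝ} (hb : 1 ≤ b) (hbA : b < A)
    (hl : l ≤ atTop) (ht₀ : 0 < t₀) (ht : Tendsto (mantissa A) l (𝓝 t₀)) :
    Tendsto (fun n => (∑' i, varianceTerm n b A i) / (b * A) ^ Nat.log A n) l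
      (𝓝 (limitVariance b A t₀)) := by
  have hA : 1 < A := by exact_mod_cast hb.trans_lt hbA
  have hA0 : (A : ℝ) ≠ 0 := by positivity
  obtain ⟨C, hC⟩ := exists_termEnvelope_le hb hbA one_pos A
  have shifted (n : ℕ) : (∑' i, varianceTerm n b A i) / (b * A) ^ Nat.log A n =
      ∑' i, varianceTerm n b A (.shift (Nat.log A n) i) / (b * A) ^ Nat.log A n := by
    rw [tsum_div_const, (LevelIndex.shift (Nat.log A n)).tsum_eq]
  simp_rw [shifted]
  refine tendsto_tsum_of_dominated_convergence
    (((summable_levelMajorant hb hbA).mul_left C).mul_left (2 * Real.exp 4))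
    (tendsto_varianceTerm_shift_div (by linarith) hA hl ht₀ ht) ?_
  filter_upwards [hl (eventually_ge_atTop 4)] with n hn i
  rw [norm_div, Real.norm_eq_abs, Real.norm_of_nonneg (by positivity), div_le_iff₀ (by positivity)]
  calc |varianceTerm n b A (.shift (Nat.log A n) i)|
      ≤ 2 * Real.exp 4 * termEnvelope b A n (.shift (Nat.log A n) i) :=
        abs_varianceTerm_le hn hb (by exact_mod_cast hA) _
    _ = 2 * Real.exp 4 * termEnvelope b A (mantissa A n) i * (b * A) ^ Nat.log A n := by
        nth_rw 1 [← mantissa_mul_pow_log (Nat.ne_zero_of_lt hA) n]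
        rw [termEnvelope_shift (by positivity) hA0]
        ring
    _ ≤ 2 * Real.exp 4 * (C * levelMajorant b A i) * (b * A) ^ Nat.log A n := by
        gcongr
        exact hC _ (mantissa_mem_Icc hA (by omega)) i

theorem tendsto_tsum_varianceTerm_div_limitVariance (hb : 1 ≤ b) (hbA : b < A) :
    Tendsto (fun n : ℕ => (∑' i, varianceTerm n b A i) / limitVariance b A n) atTop (𝓝 1) := by
  have hA : 1 < A := by exact_mod_cast hb.trans_lt hbA
  refine (tendsto_iff_ultrafilter _ _ _).2 fun u hu => ?_
  obtain ⟨t₀, ht₀, ht⟩ := isCompact_Icc.ultrafilter_le_nhds (u.map (mantissa A)) <|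
    tendsto_principal.2 <| hu <| (eventually_ne_atTop 0).mono fun n => mantissa_mem_Icc hA
  have ht₀0 : 0 < t₀ := zero_lt_one.trans_le ht₀.1
  have hQ := limitVariance_pos hb hbA ht₀0
  have numerator := tendsto_tsum_varianceTerm_div hb hbA hu ht₀0 ht
  have denominator := ((continuousOn_limitVariance hb hbA).continuousAt
    (Ioi_mem_nhds ht₀0)).tendsto.comp ht
  have ratio := numerator.div denominator hQ.ne'
  rw [div_self hQ.ne'] at ratio
  refine ratio.congr fun n => ?_
  rw [Pi.div_apply, Function.comp_apply, div_div, ← limitVariance_mul_pow (by positivity)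
    (by positivity), mantissa_mul_pow_log (by omega)]

end Asymptotics

theorem exists_periodic_mul_rpow_of_tendsto_div {a ρ : ℝ} {Q : ℝ → ℝ} {V : ℕ → ℝ} (ha : 1 < a)
    (hQ : ContinuousOn Q (Set.Ioi 0)) (hQ_pos : ∀ t > 0, 0 < Q t)
    (hQ_mul : ∀ t > 0, Q (t * a) = a ^ ρ * Q t)
    (hV : Tendsto (fun n : ℕ => V n / Q n) atTop (𝓝 1)) :
    ∃ P : ℝ → ℝ, Continuous P ∧ (∀ x, P (x + 1) = P x) ∧ (∀ x, 0 < P x) ∧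
      ∃ e : ℕ → ℝ, Tendsto e atTop (𝓝 0) ∧
        ∀ᶠ n : ℕ in atTop, V n = P (Real.logb a n) * (n : ℝ) ^ ρ * (1 + e n) := by
  have ha0 : 0 < a := by linarith
  have rpow_continuous : Continuous fun u : ℝ => a ^ u := Real.continuous_const_rpow ha0.ne'
  refine ⟨fun u => Q (a ^ u) / (a ^ u) ^ ρ, ?_, fun u => ?_, fun u => ?_,
    fun n => V n / Q n - 1, by simpa using hV.sub_const 1, ?_⟩
  · refine (hQ.comp_continuous rpow_continuous fun u => Real.rpow_pos_of_pos ha0 u).div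
      (rpow_continuous.rpow_const fun u => .inl (by positivity)) fun u => by positivity
  · beta_reduce
    rw [Real.rpow_add_one ha0.ne', hQ_mul _ (by positivity), Real.mul_rpow (by positivity) ha0.le,
      mul_comm (a ^ ρ), mul_div_mul_right _ _ (by positivity)]
  · have := hQ_pos (a ^ u) (by positivity)
    positivity
  · filter_upwards [eventually_gt_atTop 0] with n hn
    have hn0 : (0 : ℝ) < n := by exact_mod_cast hn
    have := hQ_pos n hn0
    rw [Real.rpow_logb ha0 ha.ne' hn0, add_sub_cancel]
    field_simp

/-! ### Joint occurrence of two words -/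

section Words

variable {M A : ℕ}

/-- The constraints obtained from `c`, where a constraint `(v, a)` demands the label `a` at the
node `v`, by moving them to the subtree at the child `x.1` of the root and demanding the label
`x.2` at that child. -/
def graft (x : Fin M × Fin A) (c : Finset (List (Fin M) × Fin A)) :
    Finset (List (Fin M) × Fin A) :=
  insert ([x.1], x.2) (c.image fun y => (x.1 :: y.1, y.2))

/-- The constraints on a labeling expressing that a word occurs in it. -/
def occurrenceConstraints : List (Fin M × Fin A) → Finset (List (Fin M) × Fin A)
  | [] => ∅
  | x :: u => graft x (occurrenceConstraints u)

/-- The event that a labeling satisfies the constraints `c`. -/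
def constraintEvent (c : Finset (List (Fin M) × Fin A)) : Set (List (Fin M) → Fin A) :=
  {L | ∀ y ∈ c, L y.1 = y.2}

/-- No node has two labels prescribed by `c`. -/
def IsConsistent (c : Finset (List (Fin M) × Fin A)) : Prop :=
  Set.InjOn Prod.fst (c : Set (List (Fin M) × Fin A))

open Classical in
/-- The probability that independent labels, each equal to any given letter with probability `q`,
satisfy the constraints `c`. -/
noncomputable def constraintProb (q : ℝ) (c : Finset (List (Fin M) × Fin A)) : ℝ :=
  if IsConsistent c then q ^ c.card else 0

/-- The probability that two words both occur in a labeling whose labels are independent and equal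
to any given letter with probability `q`. -/
noncomputable def jointOccurProb (q : ℝ) :
    List (Fin M × Fin A) → List (Fin M × Fin A) → ℝ
  | [], w' => q ^ w'.length
  | x :: u, [] => q ^ (x :: u).length
  | x :: u, x' :: u' =>
    if x.1 = x'.1 then if x.2 = x'.2 then q * jointOccurProb q u u' else 0
    else q ^ ((x :: u).length + (x' :: u').length)

section Constraints

variable {c c' : Finset (List (Fin M) × Fin A)}

theorem singleton_notMem_image_cons (x : Fin M × Fin A) (hc : ∀ y ∈ c, y.1 ≠ []) :
    ([x.1], x.2) ∉ c.image fun y => (x.1 :: y.1, y.2) := by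
  simp only [Finset.mem_image, not_exists, not_and]
  intro y hy h
  exact hc y hy (by simpa using congrArg Prod.fst h)

theorem injective_cons_node (m : Fin M) :
    Function.Injective fun y : List (Fin M) × Fin A => (m :: y.1, y.2) :=
  (List.cons_injective).prodMap Function.injective_id

theorem forall_mem_graft (x : Fin M × Fin A) {P : List (Fin M) × Fin A → Prop} :
    (∀ y ∈ graft x c, P y) ↔ P ([x.1], x.2) ∧ ∀ y ∈ c, P (x.1 :: y.1, y.2) := by
  rw [graft, Finset.forall_mem_insert, Finset.forall_mem_image]

theorem card_graft (x : Fin M × Fin A) (hc : ∀ y ∈ c, y.1 ≠ []) :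
    (graft x c).card = c.card + 1 := by
  rw [graft, Finset.card_insert_of_notMem (singleton_notMem_image_cons x hc),
    Finset.card_image_of_injective _ (injective_cons_node x.1)]

theorem isConsistent_graft_iff (x : Fin M × Fin A) (hc : ∀ y ∈ c, y.1 ≠ []) :
    IsConsistent (graft x c) ↔ IsConsistent c := by
  have root_notMem : [x.1] ∉ Prod.fst '' ((fun y => (x.1 :: y.1, y.2)) ''
      (c : Set (List (Fin M) × Fin A))) := by
    rintro ⟨_, ⟨y, hy, rfl⟩, h⟩
    exact hc y hy (by simpa using h)
  have hx := singleton_notMem_image_cons x hc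
  rw [← Finset.mem_coe, Finset.coe_image] at hx
  rw [IsConsistent, graft, Finset.coe_insert, Finset.coe_image, Set.injOn_insert hx,
    and_iff_left root_notMem]
  refine ⟨fun h y hy z hz hyz => injective_cons_node x.1 ?_, ?_⟩
  · exact h ⟨y, hy, rfl⟩ ⟨z, hz, rfl⟩ (congrArg (x.1 :: ·) hyz)
  · rintro h _ ⟨y, hy, rfl⟩ _ ⟨z, hz, rfl⟩ hyz
    rw [h hy hz (List.cons_injective hyz)]

theorem graft_union (x : Fin M × Fin A) : graft x (c ∪ c') = graft x c ∪ graft x c' := by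
  rw [graft, graft, graft, Finset.image_union, Finset.insert_union_distrib]

theorem constraintProb_graft (q : ℝ) (x : Fin M × Fin A) (hc : ∀ y ∈ c, y.1 ≠ []) :
    constraintProb q (graft x c) = q * constraintProb q c := by
  rw [constraintProb, constraintProb, isConsistent_graft_iff x hc, card_graft x hc, mul_ite,
    mul_zero, pow_succ']

theorem constraintEvent_union :
    constraintEvent (c ∪ c') = constraintEvent c ∩ constraintEvent c' := by
  ext L
  exact Finset.forall_mem_union

theorem measurableSet_constraintEvent (c : Finset (List (Fin M) × Fin A)) :
    MeasurableSet (constraintEvent c) := by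
  have biInter_eq : constraintEvent c =
      ⋂ y ∈ c, (fun L : List (Fin M) → Fin A => L y.1) ⁻¹' {y.2} := by
    ext L
    simp only [constraintEvent, Set.mem_ofPred_eq, Set.mem_iInter, Set.mem_preimage,
      Set.mem_singleton_iff]
  rw [biInter_eq]
  exact Finset.measurableSet_biInter _ fun y _ =>
    measurable_pi_apply y.1 (measurableSet_singleton _)

theorem IsConsistent.exists_extension [NeZero A] (hc : IsConsistent c) :
    ∃ f : List (Fin M) → Fin A, ∀ y ∈ c, f y.1 = y.2 := by
  classical
  refine ⟨fun v => if hv : ∃ a, (v, a) ∈ c then hv.choose else 0, fun y hy => ?_⟩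
  have hv : ∃ a, (y.1, a) ∈ c := ⟨y.2, hy⟩
  exact (dif_pos hv).trans <| congrArg Prod.snd (hc hv.choose_spec hy rfl)

theorem isConsistent_of_mem_constraintEvent {L : List (Fin M) → Fin A}
    (hL : L ∈ constraintEvent c) : IsConsistent c := fun y hy z hz hyz =>
  Prod.ext hyz ((hL y hy).symm.trans ((congrArg L hyz).trans (hL z hz)))

theorem measureReal_constraintEvent [NeZero A] {q : ℝ} (hq : 0 ≤ q)
    {μL : Measure (List (Fin M) → Fin A)} (hμL : IsLabelingMeasure (fun _ => q) μL)
    (c : Finset (List (Fin M) × Fin A)) :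
    μL.real (constraintEvent c) = constraintProb q c := by
  rw [constraintProb]
  split_ifs with h
  · obtain ⟨f, hf⟩ := h.exists_extension
    have cylinder : constraintEvent c = {L | ∀ v ∈ c.image Prod.fst, L v = f v} := by
      ext L
      simp only [constraintEvent, Set.mem_ofPred_eq, Finset.forall_mem_image]
      exact forall₂_congr fun y hy => by rw [hf y hy]
    rw [measureReal_def, cylinder, hμL, Finset.prod_const, Finset.card_image_of_injOn h,
      ENNReal.toReal_pow, ENNReal.toReal_ofReal hq]
  · rw [Set.eq_empty_iff_forall_notMem.2 fun L hL => h (isConsistent_of_mem_constraintEvent hL),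
      measureReal_empty]

end Constraints

section OccurrenceConstraints

theorem ne_nil_of_mem_occurrenceConstraints {w : List (Fin M × Fin A)} :
    ∀ y ∈ occurrenceConstraints w, y.1 ≠ [] := by
  cases w with
  | nil => exact fun y hy => absurd hy (Finset.notMem_empty y)
  | cons x u => exact (forall_mem_graft x).2 ⟨List.cons_ne_nil _ _, fun _ _ => List.cons_ne_nil _ _⟩

theorem head?_of_mem_occurrenceConstraints_cons {x : Fin M × Fin A} {u : List (Fin M × Fin A)} :
    ∀ y ∈ occurrenceConstraints (x :: u), y.1.head? = some x.1 :=
  (forall_mem_graft x).2 ⟨rfl, fun _ _ => rfl⟩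

theorem isConsistent_occurrenceConstraints (w : List (Fin M × Fin A)) :
    IsConsistent (occurrenceConstraints w) := by
  induction w with
  | nil => simp [occurrenceConstraints, IsConsistent]
  | cons x u ih => exact (isConsistent_graft_iff x ne_nil_of_mem_occurrenceConstraints).2 ih

theorem card_occurrenceConstraints (w : List (Fin M × Fin A)) :
    (occurrenceConstraints w).card = w.length := by
  induction w with
  | nil => rfl
  | cons x u ih =>
    rw [occurrenceConstraints, card_graft x ne_nil_of_mem_occurrenceConstraints, ih,
      List.length_cons]

theorem constraintProb_occurrenceConstraints (q : ℝ) (w : List (Fin M × Fin A)) :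
    constraintProb q (occurrenceConstraints w) = q ^ w.length := by
  rw [constraintProb, if_pos (isConsistent_occurrenceConstraints w), card_occurrenceConstraints]

theorem constraintProb_union_of_snd_ne (q : ℝ) {x x' : Fin M × Fin A} (h : x.1 = x'.1)
    (h' : x.2 ≠ x'.2) (u u' : List (Fin M × Fin A)) :
    constraintProb q (occurrenceConstraints (x :: u) ∪ occurrenceConstraints (x' :: u')) = 0 := by
  refine if_neg fun hc => h' ?_
  have hx : ([x.1], x.2) ∈ occurrenceConstraints (x :: u) := Finset.mem_insert_self _ _
  have hx' : ([x'.1], x'.2) ∈ occurrenceConstraints (x' :: u') := Finset.mem_insert_self _ _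
  have := hc (Finset.mem_union_left _ hx) (Finset.mem_union_right _ hx')
    (congrArg (fun m => [m]) h)
  exact (Prod.ext_iff.1 this).2

theorem constraintProb_union_of_fst_ne (q : ℝ) {x x' : Fin M × Fin A} (h : x.1 ≠ x'.1)
    (u u' : List (Fin M × Fin A)) :
    constraintProb q (occurrenceConstraints (x :: u) ∪ occurrenceConstraints (x' :: u')) =
      q ^ ((x :: u).length + (x' :: u').length) := by
  have node_ne : ∀ y ∈ occurrenceConstraints (x :: u),
      ∀ z ∈ occurrenceConstraints (x' :: u'), y.1 ≠ z.1 := fun y hy z hz hyz => h <| by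
    rw [← Option.some_inj, ← head?_of_mem_occurrenceConstraints_cons y hy, hyz,
      head?_of_mem_occurrenceConstraints_cons z hz]
  have disjoint : Disjoint (occurrenceConstraints (x :: u)) (occurrenceConstraints (x' :: u')) :=
    Finset.disjoint_left.2 fun y hy hy' => node_ne y hy y hy' rfl
  rw [constraintProb, if_pos, Finset.card_union_of_disjoint disjoint, card_occurrenceConstraints,
    card_occurrenceConstraints]
  rw [IsConsistent, Finset.coe_union, Set.injOn_union (Finset.disjoint_coe.2 disjoint)]
  exact ⟨isConsistent_occurrenceConstraints _, isConsistent_occurrenceConstraints _, node_ne⟩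

theorem constraintProb_union (q : ℝ) (w w' : List (Fin M × Fin A)) :
    constraintProb q (occurrenceConstraints w ∪ occurrenceConstraints w') =
      jointOccurProb q w w' := by
  induction w generalizing w' with
  | nil =>
    rw [occurrenceConstraints, Finset.empty_union, constraintProb_occurrenceConstraints,
      jointOccurProb]
  | cons x u ih =>
    cases w' with
    | nil =>
      rw [occurrenceConstraints.eq_1, Finset.union_empty, constraintProb_occurrenceConstraints,
        jointOccurProb]
    | cons x' u' =>
      rw [jointOccurProb]
      split_ifs with h h'
      · obtain rfl : x = x' := Prod.ext h h'
        rw [← ih, ← constraintProb_graft q x, graft_union]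
        · rfl
        · exact Finset.forall_mem_union.2
            ⟨ne_nil_of_mem_occurrenceConstraints, ne_nil_of_mem_occurrenceConstraints⟩
      · exact constraintProb_union_of_snd_ne q h h' u u'
      · exact constraintProb_union_of_fst_ne q h u u'

theorem jointOccurProb_comm (q : ℝ) (w w' : List (Fin M × Fin A)) :
    jointOccurProb q w w' = jointOccurProb q w' w := by
  rw [← constraintProb_union, ← constraintProb_union, Finset.union_comm]

end OccurrenceConstraints

theorem occurs_cons_iff {L : List (Fin M) → Fin A} {x : Fin M × Fin A}
    {u : List (Fin M × Fin A)} :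
    Occurs L (x :: u) ↔ L [x.1] = x.2 ∧ Occurs (fun v => L (x.1 :: v)) u := by
  refine ⟨fun h => ⟨by simpa using h ⟨0, by simp⟩, fun t => ?_⟩, ?_⟩
  · simpa using h ⟨t.1 + 1, by simp⟩
  · rintro ⟨h₀, h⟩ ⟨_ | t, ht⟩
    · simpa using h₀
    · simpa using h ⟨t, by simpa using ht⟩

theorem setOf_occurs_eq_constraintEvent (w : List (Fin M × Fin A)) :
    {L | Occurs L w} = constraintEvent (occurrenceConstraints w) := by
  suffices h : ∀ L, Occurs L w ↔ ∀ y ∈ occurrenceConstraints w, L y.1 = y.2 from Set.ext h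
  induction w with
  | nil => simp [Occurs, occurrenceConstraints]
  | cons x u ih =>
    intro L
    rw [occurs_cons_iff, ih, occurrenceConstraints, forall_mem_graft]

theorem measurableSet_setOf_occurs (w : List (Fin M × Fin A)) :
    MeasurableSet {L : List (Fin M) → Fin A | Occurs L w} :=
  setOf_occurs_eq_constraintEvent w ▸ measurableSet_constraintEvent _

section Probability

variable [NeZero A] {q : ℝ} {μL : Measure (List (Fin M) → Fin A)}

theorem measureReal_setOf_occurs (hq : 0 ≤ q) (hμL : IsLabelingMeasure (fun _ => q) μL)
    (w : List (Fin M × Fin A)) : μL.real {L | Occurs L w} = q ^ w.length := by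
  rw [setOf_occurs_eq_constraintEvent, measureReal_constraintEvent hq hμL,
    constraintProb_occurrenceConstraints]

theorem measureReal_setOf_occurs_inter (hq : 0 ≤ q) (hμL : IsLabelingMeasure (fun _ => q) μL)
    (w w' : List (Fin M × Fin A)) :
    μL.real ({L | Occurs L w} ∩ {L | Occurs L w'}) = jointOccurProb q w w' := by
  rw [setOf_occurs_eq_constraintEvent, setOf_occurs_eq_constraintEvent, ← constraintEvent_union,
    measureReal_constraintEvent hq hμL, constraintProb_union]

end Probability

end Words

/-! ### Sums over pairs of words -/

/-- The words of length `k` over `α`. -/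
def wordsOfLength (α : Type*) [Fintype α] [DecidableEq α] : ℕ → Finset (List α)
  | 0 => {[]}
  | k + 1 => (Finset.univ ×ˢ wordsOfLength α k).image fun y : α × List α => y.1 :: y.2

section WordsOfLength

variable {α : Type*} [Fintype α] [DecidableEq α]

theorem mem_wordsOfLength {k : ℕ} {w : List α} : w ∈ wordsOfLength α k ↔ w.length = k := by
  induction k generalizing w with
  | zero => simp [wordsOfLength]
  | succ k ih => cases w <;> simp [wordsOfLength, ih]

theorem sum_wordsOfLength_succ {β : Type*} [AddCommMonoid β] (k : ℕ) (f : List α → β) :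
    ∑ w ∈ wordsOfLength α (k + 1), f w = ∑ x, ∑ u ∈ wordsOfLength α k, f (x :: u) := by
  rw [wordsOfLength, Finset.sum_image, Finset.sum_product]
  rintro ⟨x, u⟩ _ ⟨x', u'⟩ _ h
  simpa using h

theorem card_wordsOfLength (k : ℕ) : (wordsOfLength α k).card = Fintype.card α ^ k := by
  induction k with
  | zero => rfl
  | succ k ih =>
    rw [Finset.card_eq_sum_ones, sum_wordsOfLength_succ, ← Finset.card_eq_sum_ones, ih,
      Finset.sum_const, Finset.card_univ, smul_eq_mul, pow_succ']

end WordsOfLength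

/-- The sum over the pairs of words of lengths `k` and `K` of a function of their joint occurrence
probability, when any given letter has probability `q`. -/
noncomputable def pairSum (M A : ℕ) (q : ℝ) (k K : ℕ) (F : ℝ → ℝ) : ℝ :=
  ∑ w ∈ wordsOfLength (Fin M × Fin A) k, ∑ w' ∈ wordsOfLength (Fin M × Fin A) K,
    F (jointOccurProb q w w')

section PairSum

variable {M A : ℕ} (q : ℝ)

theorem sum_wordsOfLength_const (k : ℕ) (c : ℝ) :
    ∑ _w ∈ wordsOfLength (Fin M × Fin A) k, c = ((M : ℝ) * A) ^ k * c := by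
  rw [Finset.sum_const, card_wordsOfLength, Fintype.card_prod, Fintype.card_fin, Fintype.card_fin,
    nsmul_eq_mul]
  push_cast
  rfl

theorem sum_sum_wordsOfLength_const (k K : ℕ) (c : ℝ) :
    ∑ _w ∈ wordsOfLength (Fin M × Fin A) k, ∑ _w' ∈ wordsOfLength (Fin M × Fin A) K, c =
      ((M : ℝ) * A) ^ (k + K) * c := by
  rw [sum_wordsOfLength_const, sum_wordsOfLength_const, pow_add, mul_assoc]

theorem sum_ite_eq_const {ι : Type*} [Fintype ι] [DecidableEq ι] (i : ι) (x y : ℝ) :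
    ∑ j, (if i = j then x else y) = x + (Fintype.card ι - 1) * y := by
  rw [← Finset.add_sum_erase _ _ (Finset.mem_univ i), if_pos rfl, Finset.sum_congr rfl
    fun j hj => if_neg (Finset.ne_of_mem_erase hj).symm, Finset.sum_const,
    Finset.card_erase_of_mem (Finset.mem_univ i), Finset.card_univ, nsmul_eq_mul,
    Nat.cast_pred (Fintype.card_pos_iff.2 ⟨i⟩)]

theorem pairSum_comm (k K : ℕ) (F : ℝ → ℝ) : pairSum M A q k K F = pairSum M A q K k F := by
  rw [pairSum, pairSum, Finset.sum_comm]
  simp_rw [jointOccurProb_comm q]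

theorem pairSum_zero (K : ℕ) (F : ℝ → ℝ) :
    pairSum M A q 0 K F = ((M : ℝ) * A) ^ K * F (q ^ K) := by
  rw [pairSum, wordsOfLength, Finset.sum_singleton, ← sum_wordsOfLength_const]
  exact Finset.sum_congr rfl fun w hw => by rw [jointOccurProb, mem_wordsOfLength.1 hw]

theorem sum_sum_jointOccurProb_cons (x x' : Fin M × Fin A) (k K : ℕ) (F : ℝ → ℝ) :
    ∑ u ∈ wordsOfLength (Fin M × Fin A) k, ∑ u' ∈ wordsOfLength (Fin M × Fin A) K,
      F (jointOccurProb q (x :: u) (x' :: u')) =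
    if x.1 = x'.1 then
      if x.2 = x'.2 then pairSum M A q k K fun τ => F (q * τ) else ((M : ℝ) * A) ^ (k + K) * F 0
    else ((M : ℝ) * A) ^ (k + K) * F (q ^ (k + K + 2)) := by
  simp only [jointOccurProb]
  split_ifs
  · rfl
  · rw [sum_sum_wordsOfLength_const]
  · rw [← sum_sum_wordsOfLength_const]
    refine Finset.sum_congr rfl fun u hu => Finset.sum_congr rfl fun u' hu' => ?_
    rw [List.length_cons, List.length_cons, mem_wordsOfLength.1 hu, mem_wordsOfLength.1 hu',
      show k + 1 + (K + 1) = k + K + 2 by ring]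

theorem pairSum_succ_succ (k K : ℕ) (F : ℝ → ℝ) :
    pairSum M A q (k + 1) (K + 1) F =
      M * A * (pairSum M A q k K (fun τ => F (q * τ))
        + (A - 1) * (((M : ℝ) * A) ^ (k + K) * F 0)
        + (M - 1) * (A * (((M : ℝ) * A) ^ (k + K) * F (q ^ (k + K + 2))))) := by
  calc pairSum M A q (k + 1) (K + 1) F
      = ∑ x : Fin M × Fin A, ∑ x' : Fin M × Fin A, ∑ u ∈ wordsOfLength (Fin M × Fin A) k,
          ∑ u' ∈ wordsOfLength (Fin M × Fin A) K, F (jointOccurProb q (x :: u) (x' :: u')) := by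
        simp_rw [pairSum, sum_wordsOfLength_succ]
        exact Finset.sum_congr rfl fun x _ => Finset.sum_comm
    _ = _ := by
        simp only [sum_sum_jointOccurProb_cons, Fintype.sum_prod_type, Finset.sum_ite_irrel,
          sum_ite_eq_const, Finset.sum_const, Finset.card_univ, Fintype.card_fin, Fintype.card_prod,
          nsmul_eq_mul]
        push_cast
        ring

theorem sum_branchWeight_mul_pow {b : ℝ} (hb : b ≠ 0) (k : ℕ) :
    ∑ d ∈ Finset.range (k + 1), branchWeight b d * b ^ d = b ^ k := by
  induction k with
  | zero => simp [branchWeight]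
  | succ k ih =>
    rw [Finset.sum_range_succ, ih, branchWeight, if_neg k.succ_ne_zero, pow_succ]
    field_simp
    ring

/-- The summand `d` comes from the pairs of words whose node paths separate `d` steps before the end
of the shorter one. -/
theorem pairSum_eq_sum_branchWeight (hM : M ≠ 0) (e k : ℕ) (F : ℝ → ℝ) :
    pairSum M A q k (k + e) F =
      ∑ d ∈ Finset.range (k + 1), branchWeight M d * M ^ (k + e + d) *
        (A ^ (k + e + d) * F (q ^ (k + e + d)) + (A ^ (2 * k + e) - A ^ (k + e + d)) * F 0) := by
  have hM0 : (M : ℝ) ≠ 0 := by exact_mod_cast hM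
  induction k generalizing F with
  | zero =>
    rw [pairSum_zero]
    simp [branchWeight, mul_pow, mul_assoc]
  | succ k ih =>
    have shifted : ∀ d, branchWeight (M : ℝ) d * M ^ (k + 1 + e + d) *
        (A ^ (k + 1 + e + d) * F (q ^ (k + 1 + e + d))
          + (A ^ (2 * (k + 1) + e) - A ^ (k + 1 + e + d)) * F 0) =
        M * A * (branchWeight (M : ℝ) d * M ^ (k + e + d) *
          (A ^ (k + e + d) * F (q * q ^ (k + e + d))
            + (A ^ (2 * k + e) - A ^ (k + e + d)) * F (q * 0)))
          + branchWeight (M : ℝ) d * M ^ d *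
            (M ^ (k + e + 1) * A ^ (2 * k + e + 1) * (A - 1) * F 0) := fun d => by
      rw [mul_zero, ← pow_succ', show k + 1 + e + d = k + e + d + 1 by ring]
      ring
    have weight_succ : branchWeight (M : ℝ) (k + 1) = 1 - 1 / M := if_neg k.succ_ne_zero
    rw [show k + 1 + e = (k + e) + 1 by ring, pairSum_succ_succ,
      ← show k + 1 + e = (k + e) + 1 by ring, Finset.sum_range_succ _ (k + 1),
      Finset.sum_congr rfl fun d _ => shifted d, Finset.sum_add_distrib, ← Finset.mul_sum,
      ← ih fun τ => F (q * τ), ← Finset.sum_mul, sum_branchWeight_mul_pow hM0, weight_succ,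
      show k + (k + e) + 2 = k + 1 + e + (k + 1) by ring]
    field_simp
    ring

end PairSum

/-- The sum over the pairs of words of lengths `k` and `K` of the covariance of the indicators of
their presence in the trie built from `n` labelings with letter probabilities `1 / A`. -/
noncomputable def levelCovariance (M A n k K : ℕ) : ℝ :=
  pairSum M A (A : ℝ)⁻¹ k K fun τ =>
    jointAtMostOne n ((A : ℝ)⁻¹ ^ k) ((A : ℝ)⁻¹ ^ K) τ -
      jointAtMostOne n ((A : ℝ)⁻¹ ^ k) ((A : ℝ)⁻¹ ^ K) ((A : ℝ)⁻¹ ^ k * (A : ℝ)⁻¹ ^ K)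

section LevelCovariance

variable {M A : ℕ} (n : ℕ)

theorem jointAtMostOne_comm (p p' τ : ℝ) : jointAtMostOne n p p' τ = jointAtMostOne n p' p τ := by
  rw [jointAtMostOne, jointAtMostOne]
  ring

theorem levelCovariance_comm (k K : ℕ) :
    levelCovariance M A n k K = levelCovariance M A n K k := by
  rw [levelCovariance, pairSum_comm]
  simp_rw [jointAtMostOne_comm n ((A : ℝ)⁻¹ ^ k), mul_comm ((A : ℝ)⁻¹ ^ k)]
  rfl

/-- Here `c` pairs of words have joint occurrence probability `τ` and `c' - c` have `0`, while
independence would give `τ'`: the average of the joint probability is the one under independence, so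
that the linear terms in `τ` cancel. -/
theorem mul_sub_add_sub_mul_sub_eq_jointRemainder {c c' τ τ' : ℝ} (hc : c * τ = 1)
    (hc' : c' * τ' = 1) (p p' : ℝ) :
    c * (jointAtMostOne n p p' τ - jointAtMostOne n p p' τ')
        + (c' - c) * (jointAtMostOne n p p' 0 - jointAtMostOne n p p' τ') =
      c * jointRemainder n p p' τ - c' * jointRemainder n p p' τ' := by
  unfold jointRemainder
  linear_combination jointAtMostOneDeriv n p p' 0 * (hc - hc')

theorem varianceTerm_natCast {k d : ℕ} (hd : d < k) (e : ℕ) :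
    varianceTerm n M A ((k : ℤ), e, d) = symmWeight e * (branchWeight M d * M ^ (k + e + d) *
      (A ^ (k + e + d) * jointRemainder n ((A : ℝ)⁻¹ ^ k) ((A : ℝ)⁻¹ ^ (k + e))
          ((A : ℝ)⁻¹ ^ (k + e + d)) -
        A ^ (2 * k + e) * jointRemainder n ((A : ℝ)⁻¹ ^ k) ((A : ℝ)⁻¹ ^ (k + e))
          ((A : ℝ)⁻¹ ^ k * (A : ℝ)⁻¹ ^ (k + e)))) := by
  have zpow_neg_eq (j : ℕ) : (A : ℝ) ^ (-(j : ℤ)) = (A : ℝ)⁻¹ ^ j := by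
    rw [zpow_neg, zpow_natCast, inv_pow]
  refine (if_pos (Int.ofNat_lt.2 hd)).trans ?_
  rw [pairWeight]
  simp only [LevelIndex.shallow, LevelIndex.deep, LevelIndex.joint]
  norm_cast
  rw [zpow_neg_eq, zpow_neg_eq, zpow_neg_eq, show k + (k + e) = 2 * k + e by ring]
  ring

theorem symmWeight_mul_levelCovariance (hM : M ≠ 0) (hA : A ≠ 0) (k e : ℕ) :
    symmWeight e * levelCovariance M A n k (k + e) =
      ∑ d ∈ Finset.range k, varianceTerm n M A ((k : ℤ), e, d) := by
  have hA0 : (A : ℝ) ≠ 0 := by exact_mod_cast hA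
  have pow_mul_inv_pow (j : ℕ) : (A : ℝ) ^ j * (A : ℝ)⁻¹ ^ j = 1 := by
    rw [← mul_pow, mul_inv_cancel₀ hA0, one_pow]
  have prob_mul : (A : ℝ)⁻¹ ^ k * (A : ℝ)⁻¹ ^ (k + e) = (A : ℝ)⁻¹ ^ (2 * k + e) := by ring
  rw [levelCovariance, pairSum_eq_sum_branchWeight _ hM]
  simp_rw [prob_mul, mul_sub_add_sub_mul_sub_eq_jointRemainder n (pow_mul_inv_pow (k + e + _))
    (pow_mul_inv_pow (2 * k + e))]
  rw [Finset.sum_range_succ, show k + e + k = 2 * k + e by ring, sub_self, mul_zero, add_zero,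
    Finset.mul_sum]
  refine Finset.sum_congr rfl fun d hd => ?_
  rw [varianceTerm_natCast n (Finset.mem_range.1 hd), prob_mul]

theorem summable_varianceTerm {a b : ℝ} {n : ℕ} (hn : 4 ≤ n) (hb : 1 ≤ b) (hba : b < a)
    (ha : 2 ≤ a) : Summable (varianceTerm n b a) :=
  .of_norm_bounded ((summable_termEnvelope hb hba (by positivity)).mul_left (2 * Real.exp 4))
    (abs_varianceTerm_le hn hb ha)

theorem hasSum_symmWeight_mul_levelCovariance {n : ℕ} (hn : 4 ≤ n) (hM : 1 ≤ M) (hMA : M < A) :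
    HasSum (fun x : ℕ × ℕ => symmWeight x.2 * levelCovariance M A n x.1 (x.1 + x.2))
      (∑' i, varianceTerm n M A i) := by
  let toIndex : (ℕ × ℕ) × ℕ → LevelIndex := fun x => ((x.1.1 : ℤ), x.1.2, x.2)
  have toIndex_injective : Function.Injective toIndex := by
    rintro ⟨⟨k, e⟩, d⟩ ⟨⟨k', e'⟩, d'⟩ h
    simpa [toIndex, and_assoc] using h
  have eq_zero : ∀ i ∉ Set.range toIndex, varianceTerm n M A i = 0 := by
    rintro ⟨k, e, d⟩ hi
    refine if_neg fun hd => hi ⟨((k.toNat, e), d), ?_⟩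
    have hk : 0 ≤ k := (Int.natCast_nonneg d).trans (le_of_lt hd)
    simp only [toIndex, Int.toNat_of_nonneg hk]
  have summable : Summable (varianceTerm n M A) := summable_varianceTerm hn
    (by exact_mod_cast hM) (by exact_mod_cast hMA) (by exact_mod_cast (by omega : 2 ≤ A))
  refine ((toIndex_injective.hasSum_iff eq_zero).2 summable.hasSum).prod_fiberwise fun x => ?_
  rw [symmWeight_mul_levelCovariance n (by omega) (by omega)]
  refine hasSum_sum_of_ne_finset_zero fun d hd => if_neg ?_
  simpa [toIndex, LevelIndex.shallow] using hd

end LevelCovariance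

section SymmetricSum

variable {c : ℕ → ℕ → ℝ}

theorem sum_range_sum_range_of_symm (hc : ∀ k K, c k K = c K k) (H : ℕ) :
    ∑ k ∈ Finset.range H, ∑ K ∈ Finset.range H, c k K =
      ∑ K ∈ Finset.range H, ∑ x ∈ Finset.HasAntidiagonal.antidiagonal K,
        symmWeight x.2 * c x.1 (x.1 + x.2) := by
  have antidiagonal_sum (K : ℕ) :
      ∑ x ∈ Finset.HasAntidiagonal.antidiagonal K, symmWeight x.2 * c x.1 (x.1 + x.2) =
        2 * ∑ k ∈ Finset.range K, c k K + c K K := by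
    rw [Finset.Nat.sum_antidiagonal_eq_sum_range_succ_mk, Finset.sum_range_succ, Finset.mul_sum]
    congr 1
    · refine Finset.sum_congr rfl fun k hk => ?_
      have hk := Finset.mem_range.1 hk
      rw [symmWeight, if_neg (by omega), show k + (K - k) = K by omega]
    · simp [symmWeight]
  induction H with
  | zero => rfl
  | succ H ih =>
    simp_rw [Finset.sum_range_succ, Finset.sum_add_distrib, ← ih, antidiagonal_sum, hc H]
    ring

theorem tendsto_sum_range_sum_range_of_symm {s : ℝ} (hc : ∀ k K, c k K = c K k)
    (h : HasSum (fun x : ℕ × ℕ => symmWeight x.2 * c x.1 (x.1 + x.2)) s) :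
    Tendsto (fun H => ∑ k ∈ Finset.range H, ∑ K ∈ Finset.range H, c k K) atTop (𝓝 s) := by
  simp_rw [sum_range_sum_range_of_symm hc]
  have sigma_hasSum := (Finset.HasAntidiagonal.sigmaAntidiagonalEquivProd (A := ℕ)).hasSum_iff.2 h
  exact (sigma_hasSum.sigma fun K => Finset.hasSum _ _).tendsto_sum_nat

end SymmetricSum

/-! ### Independent trials -/

section OptionCells

variable {ι : Type*}

theorem exists_option_eq_some_iff {P : ι → Prop} :
    (∃ s : Option ι, ∀ j, s = some j ↔ P j) ↔ Subsingleton {j // P j} := by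
  constructor
  · rintro ⟨s, hs⟩
    refine ⟨fun i j => Subtype.ext (Option.some_injective _ ?_)⟩
    rw [← (hs i).2 i.2, ← (hs j).2 j.2]
  · intro h
    by_cases hP : ∃ i, P i
    · obtain ⟨i, hi⟩ := hP
      refine ⟨some i, fun j => ⟨fun hij => Option.some_injective _ hij ▸ hi, fun hj => ?_⟩⟩
      exact congrArg (fun i => some i.1) (h.elim ⟨i, hi⟩ ⟨j, hj⟩)
    · exact ⟨none, fun j => iff_of_false (by simp) fun hj => hP ⟨j, hj⟩⟩

variable [Fintype ι]

theorem prod_eq_mul_pow_of_ne {f : ι → ℝ} {r : ℝ} (i : ι)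
    (hf : ∀ j, j ≠ i → f j = r) : ∏ j, f j = f i * r ^ (Fintype.card ι - 1) := by
  classical
  rw [← Finset.mul_prod_erase _ _ (Finset.mem_univ i),
    Finset.prod_eq_pow_card fun j hj => hf j (Finset.ne_of_mem_erase hj),
    Finset.card_erase_of_mem (Finset.mem_univ i), Finset.card_univ]

theorem prod_eq_mul_mul_pow_of_ne {f : ι → ℝ} {r : ℝ} {i i' : ι} (hii' : i ≠ i')
    (hf : ∀ j, j ≠ i → j ≠ i' → f j = r) :
    ∏ j, f j = f i * f i' * r ^ (Fintype.card ι - 2) := by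
  classical
  have hi' : i' ∈ Finset.univ.erase i := Finset.mem_erase.2 ⟨hii'.symm, Finset.mem_univ _⟩
  rw [← Finset.mul_prod_erase _ _ (Finset.mem_univ i), ← Finset.mul_prod_erase _ _ hi',
    Finset.prod_eq_pow_card fun j hj => hf j (Finset.ne_of_mem_erase (Finset.mem_of_mem_erase hj))
      (Finset.ne_of_mem_erase hj), Finset.card_erase_of_mem hi',
    Finset.card_erase_of_mem (Finset.mem_univ i), Finset.card_univ, Nat.sub_sub, mul_assoc]

end OptionCells

section AtMostOne

variable {Ω ι : Type*}

open Classical in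
/-- The indicator that a point lies in `O` if `inside` holds, and outside `O` otherwise. -/
noncomputable def cellIndicator (O : Set Ω) (inside : Prop) (x : Ω) : ℝ :=
  if inside then O.indicator 1 x else 1 - O.indicator 1 x

open Classical in
/-- The probability that a point lies on the prescribed side of two events of probabilities `p` and
`p'` whose intersection has probability `τ`; the sides are as for `cellIndicator`. -/
noncomputable def cellProb (p p' τ : ℝ) (inside inside' : Prop) : ℝ :=
  if inside then if inside' then τ else p - τ
  else if inside' then p' - τ else 1 - p - p' + τ

open Classical in
/-- The indicator that at most one coordinate of `x` lies in `O`. -/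
noncomputable def atMostOne (O : Set Ω) (x : ι → Ω) : ℝ :=
  if Nat.card {i // x i ∈ O} ≤ 1 then 1 else 0

theorem cellIndicator_eq_ite (O : Set Ω) (inside : Prop) (x : Ω) [Decidable (inside ↔ x ∈ O)] :
    cellIndicator O inside x = if inside ↔ x ∈ O then 1 else 0 := by
  by_cases hs : inside <;> by_cases hx : x ∈ O <;> simp [cellIndicator, hs, hx]

theorem norm_cellIndicator_le_one (O : Set Ω) (inside : Prop) (x : Ω) :
    ‖cellIndicator O inside x‖ ≤ 1 := by
  classical
  rw [cellIndicator_eq_ite]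
  split_ifs <;> simp

theorem norm_atMostOne_le_one (O : Set Ω) (x : ι → Ω) : ‖atMostOne O x‖ ≤ 1 := by
  rw [atMostOne]
  split_ifs <;> simp

theorem atMostOne_mul_self (O : Set Ω) (x : ι → Ω) :
    atMostOne O x * atMostOne O x = atMostOne O x := by
  rw [atMostOne]
  split_ifs <;> simp

/-- The summand `s` is the indicator that the set of the coordinates in `O` is `s`, seen as a set
with at most one element. -/
theorem atMostOne_eq_sum_prod [Fintype ι] (O : Set Ω) (x : ι → Ω) :
    atMostOne O x = ∑ s : Option ι, ∏ j, cellIndicator O (s = some j) (x j) := by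
  classical
  simp_rw [cellIndicator_eq_ite, Finset.prod_ite_zero, Finset.prod_const_one, Finset.mem_univ,
    forall_const, atMostOne, Finite.card_le_one_iff_subsingleton, ← exists_option_eq_some_iff]
  split_ifs with h
  · obtain ⟨s, hs⟩ := h
    have iff_eq (s' : Option ι) : (∀ j, s' = some j ↔ x j ∈ O) ↔ s' = s := by
      simp_rw [← hs, ← Option.ext_iff]
    simp_rw [iff_eq]
    simp
  · exact (Finset.sum_eq_zero fun s _ => if_neg fun hs => h ⟨s, hs⟩).symm

theorem sum_sum_prod_cellProb [Fintype ι] (p p' τ : ℝ) :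
    ∑ s : Option ι, ∑ s' : Option ι, ∏ j, cellProb p p' τ (s = some j) (s' = some j) =
      jointAtMostOne (Fintype.card ι) p p' τ := by
  classical
  set r := 1 - p - p' + τ with hr
  have none_none : ∏ j : ι, cellProb p p' τ (none = some j) (none = some j) =
      r ^ Fintype.card ι := by
    simp [cellProb, hr]
  have some_none (i : ι) : ∏ j, cellProb p p' τ (some i = some j) (none = some j) =
      (p - τ) * r ^ (Fintype.card ι - 1) := by
    rw [prod_eq_mul_pow_of_ne (r := r) i fun j hj => by simp [cellProb, hr, hj.symm]]
    simp [cellProb]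
  have none_some (i : ι) : ∏ j, cellProb p p' τ (none = some j) (some i = some j) =
      (p' - τ) * r ^ (Fintype.card ι - 1) := by
    rw [prod_eq_mul_pow_of_ne (r := r) i fun j hj => by simp [cellProb, hr, hj.symm]]
    simp [cellProb]
  have some_some (i i' : ι) : ∏ j, cellProb p p' τ (some i = some j) (some i' = some j) =
      if i = i' then τ * r ^ (Fintype.card ι - 1)
      else (p - τ) * (p' - τ) * r ^ (Fintype.card ι - 2) := by
    split_ifs with h
    · subst h
      rw [prod_eq_mul_pow_of_ne (r := r) i fun j hj => by simp [cellProb, hr, hj.symm]]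
      simp [cellProb]
    · rw [prod_eq_mul_mul_pow_of_ne (r := r) h fun j hj hj' => by
        simp [cellProb, hr, hj.symm, hj'.symm]]
      simp [cellProb, h, Ne.symm h]
  simp_rw [Fintype.sum_option, none_none, some_none, none_some, some_some, sum_ite_eq_const,
    Finset.sum_add_distrib, Finset.sum_const, Finset.card_univ, nsmul_eq_mul, jointAtMostOne, ← hr]
  ring

variable [MeasurableSpace Ω] {μ : Measure Ω} [IsProbabilityMeasure μ] {O O' : Set Ω}

theorem measurable_cellIndicator (hO : MeasurableSet O) (inside : Prop) :
    Measurable (cellIndicator O inside) := by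
  have measurable_indicator : Measurable (O.indicator (1 : Ω → ℝ)) := measurable_one.indicator hO
  unfold cellIndicator
  split_ifs
  · exact measurable_indicator
  · exact measurable_indicator.const_sub 1

theorem measurable_atMostOne [Finite ι] (hO : MeasurableSet O) :
    Measurable fun x : ι → Ω => atMostOne O x := by
  cases nonempty_fintype ι
  simp_rw [atMostOne_eq_sum_prod]
  exact Finset.measurable_fun_sum _ fun s _ => Finset.measurable_fun_prod _ fun j _ =>
    (measurable_cellIndicator hO _).comp (measurable_pi_apply j)

theorem integrable_cellIndicator_mul (hO : MeasurableSet O) (hO' : MeasurableSet O')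
    (inside inside' : Prop) :
    Integrable (fun x => cellIndicator O inside x * cellIndicator O' inside' x) μ := by
  refine .of_bound ((measurable_cellIndicator hO _).mul
    (measurable_cellIndicator hO' _)).aestronglyMeasurable 1 (.of_forall fun x => ?_)
  rw [norm_mul]
  exact mul_le_one₀ (norm_cellIndicator_le_one _ _ _) (norm_nonneg _)
    (norm_cellIndicator_le_one _ _ _)

theorem integral_cellIndicator_mul (hO : MeasurableSet O) (hO' : MeasurableSet O')
    (inside inside' : Prop) :
    ∫ x, cellIndicator O inside x * cellIndicator O' inside' x ∂μ =
      cellProb (μ.real O) (μ.real O') (μ.real (O ∩ O')) inside inside' := by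
  have integrable {S : Set Ω} (hS : MeasurableSet S) : Integrable (S.indicator (1 : Ω → ℝ)) μ :=
    (integrable_const 1).indicator hS
  have indicator_mul (x : Ω) : O.indicator (1 : Ω → ℝ) x * O'.indicator 1 x =
      (O ∩ O').indicator 1 x := by
    rw [Set.inter_indicator_one, Pi.mul_apply]
  have int := integrable hO
  have int' := integrable hO'
  have int_inter := integrable (hO.inter hO')
  unfold cellIndicator cellProb
  split_ifs
  · simp_rw [indicator_mul, integral_indicator_one (hO.inter hO')]
  · simp_rw [mul_sub, mul_one, indicator_mul]
    rw [integral_sub int int_inter, integral_indicator_one hO,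
      integral_indicator_one (hO.inter hO')]
  · simp_rw [sub_mul, one_mul, indicator_mul]
    rw [integral_sub int' int_inter, integral_indicator_one hO',
      integral_indicator_one (hO.inter hO')]
  · have expand (x : Ω) : (1 - O.indicator (1 : Ω → ℝ) x) * (1 - O'.indicator 1 x) =
        1 - O.indicator 1 x - O'.indicator 1 x + (O ∩ O').indicator 1 x := by
      rw [← indicator_mul]
      ring
    have int_compl : Integrable (fun x => 1 - O.indicator (1 : Ω → ℝ) x) μ :=
      (integrable_const 1).sub int
    have int_outside : Integrable (fun x => 1 - O.indicator (1 : Ω → ℝ) x - O'.indicator 1 x) μ :=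
      int_compl.sub int'
    simp_rw [expand]
    rw [integral_add int_outside int_inter, integral_sub int_compl int',
      integral_sub (integrable_const 1) int, integral_const, integral_indicator_one hO,
      integral_indicator_one hO', integral_indicator_one (hO.inter hO'), probReal_univ, one_smul]

theorem integral_atMostOne_mul [Fintype ι] (hO : MeasurableSet O) (hO' : MeasurableSet O') :
    ∫ x : ι → Ω, atMostOne O x * atMostOne O' x ∂(Measure.pi fun _ => μ) =
      jointAtMostOne (Fintype.card ι) (μ.real O) (μ.real O') (μ.real (O ∩ O')) := by
  simp_rw [atMostOne_eq_sum_prod, Finset.sum_mul_sum, ← Finset.prod_mul_distrib]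
  have integrable (s s' : Option ι) :
      Integrable (fun x : ι → Ω => ∏ j, (cellIndicator O (s = some j) (x j) *
        cellIndicator O' (s' = some j) (x j))) (Measure.pi fun _ => μ) :=
    Integrable.fintype_prod fun j => integrable_cellIndicator_mul hO hO' _ _
  rw [integral_finsetSum _ fun s _ => integrable_finsetSum _ fun s' _ => integrable s s',
    ← sum_sum_prod_cellProb]
  refine Finset.sum_congr rfl fun s _ => ?_
  rw [integral_finsetSum _ fun s' _ => integrable s s']
  refine Finset.sum_congr rfl fun s' _ => ?_
  rw [integral_fintype_prod_eq_prod (f := fun j x =>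
    cellIndicator O (s = some j) x * cellIndicator O' (s' = some j) x)]
  exact Finset.prod_congr rfl fun j _ => integral_cellIndicator_mul hO hO' _ _

theorem integral_atMostOne [Fintype ι] (hO : MeasurableSet O) :
    ∫ x : ι → Ω, atMostOne O x ∂(Measure.pi fun _ => μ) =
      jointAtMostOne (Fintype.card ι) (μ.real O) (μ.real O) (μ.real O) := by
  simpa only [Set.inter_self, atMostOne_mul_self] using
    integral_atMostOne_mul (ι := ι) (μ := μ) hO hO

end AtMostOne

theorem jointAtMostOne_self (n : ℕ) (p : ℝ) :
    jointAtMostOne n p p p = (1 - p) ^ n + n * (1 - p) ^ (n - 1) * p := by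
  rw [jointAtMostOne]
  ring

theorem jointAtMostOne_mul (n : ℕ) (p p' : ℝ) :
    jointAtMostOne n p p' (p * p') = jointAtMostOne n p p p * jointAtMostOne n p' p' p' := by
  rw [jointAtMostOne_self, jointAtMostOne_self, jointAtMostOne,
    show 1 - p - p' + p * p' = (1 - p) * (1 - p') by ring]
  rcases n with _ | _ | m
  · simp
  · norm_num
    ring
  · rw [show m + 1 + 1 - 1 = m + 1 by omega, show m + 1 + 1 - 2 = m by omega]
    simp only [mul_pow]
    push_cast
    ring

theorem one_sub_jointAtMostOne_self_le {p : ℝ} (hp0 : 0 ≤ p) (hp1 : p ≤ 1) (n : ℕ) :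
    1 - jointAtMostOne n p p p ≤ (n : ℝ) ^ 2 * p ^ 2 := by
  have bernoulli (m : ℕ) : 1 - m * p ≤ (1 - p) ^ m := by
    simpa [← sub_eq_add_neg] using one_add_mul_le_pow (a := -p) (by linarith) m
  have pred_le : ((n - 1 : ℕ) : ℝ) ≤ n := by exact_mod_cast Nat.sub_le n 1
  have bernoulli_pred : 1 - n * p ≤ (1 - p) ^ (n - 1) :=
    (by gcongr : 1 - n * p ≤ 1 - (n - 1 : ℕ) * p).trans (bernoulli (n - 1))
  have one_hit : n * p * (1 - n * p) ≤ n * p * (1 - p) ^ (n - 1) := by gcongr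
  rw [jointAtMostOne_self]
  linarith [bernoulli n]

/-! ### The variance of the trie size -/

section MonotoneLimit

variable {Ω : Type*} [MeasurableSpace Ω] {μ : Measure Ω}

theorem integrable_of_tendsto_of_integral_norm_le {F : ℕ → Ω → ℝ} {f : Ω → ℝ} {C : ℝ}
    (hF : ∀ H, Integrable (F H) μ)
    (hlim : ∀ᵐ ω ∂μ, Tendsto (fun H => F H ω) atTop (𝓝 (f ω)))
    (hC : ∀ H, ∫ ω, ‖F H ω‖ ∂μ ≤ C) : Integrable f μ := by
  rw [← memLp_one_iff_integrable]
  refine ⟨aestronglyMeasurable_of_tendsto_ae atTop (fun H => (hF H).1) hlim, ?_⟩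
  calc eLpNorm f 1 μ ≤ liminf (fun H => eLpNorm (F H) 1 μ) atTop :=
        Lp.eLpNorm_lim_le_liminf_eLpNorm (fun H => (hF H).1) f hlim
    _ ≤ ENNReal.ofReal C := by
        refine liminf_le_of_frequently_le' (.of_forall fun H => ?_)
        rw [eLpNorm_one_eq_lintegral_enorm, ← ofReal_integral_norm_eq_lintegral_enorm (hF H)]
        exact ENNReal.ofReal_le_ofReal (hC H)
    _ < ⊤ := ENNReal.ofReal_lt_top

variable [IsProbabilityMeasure μ] {X : ℕ → Ω → ℝ} {Y : Ω → ℝ}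

theorem integrable_sq_of_tendsto {B C : ℝ} (hX : ∀ H, MemLp (X H) 2 μ)
    (hmean : ∀ H, ‖∫ ω, X H ω ∂μ‖ ≤ B) (hvar : ∀ H, variance (X H) μ ≤ C)
    (hlim : ∀ᵐ ω ∂μ, Tendsto (fun H => X H ω) atTop (𝓝 (Y ω))) :
    Integrable (fun ω => Y ω ^ 2) μ := by
  refine integrable_of_tendsto_of_integral_norm_le (C := C + B ^ 2)
    (fun H => (hX H).integrable_sq) (hlim.mono fun ω h => h.pow 2) fun H => ?_
  have sq_mean_le : (∫ ω, X H ω ∂μ) ^ 2 ≤ B ^ 2 := sq_le_sq.2 ((hmean H).trans (le_abs_self B))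
  have variance_eq : variance (X H) μ = ∫ ω, X H ω ^ 2 ∂μ - (∫ ω, X H ω ∂μ) ^ 2 :=
    variance_eq_sub (hX H)
  simp_rw [norm_pow, Real.norm_eq_abs, sq_abs]
  linarith [hvar H]

theorem variance_eq_of_tendsto_of_monotone {B v : ℝ} (hX : ∀ H, MemLp (X H) 2 μ)
    (hX0 : ∀ H ω, 0 ≤ X H ω) (hmono : ∀ ω, Monotone fun H => X H ω)
    (hmean : ∀ H, ∫ ω, X H ω ∂μ ≤ B) (hvar : Tendsto (fun H => variance (X H) μ) atTop (𝓝 v))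
    (hlim : ∀ᵐ ω ∂μ, Tendsto (fun H => X H ω) atTop (𝓝 (Y ω))) : variance Y μ = v := by
  obtain ⟨C, hC⟩ := hvar.bddAbove_range
  have integrable_sq : Integrable (fun ω => Y ω ^ 2) μ :=
    integrable_sq_of_tendsto hX (fun H => by
      rw [Real.norm_of_nonneg (integral_nonneg (hX0 H))]
      exact hmean H) (fun H => hC ⟨H, rfl⟩) hlim
  have memLp : MemLp Y 2 μ := (memLp_two_iff_integrable_sq
    (aestronglyMeasurable_of_tendsto_ae atTop (fun H => (hX H).1) hlim)).2 integrable_sq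
  have tendsto_mean : Tendsto (fun H => ∫ ω, X H ω ∂μ) atTop (𝓝 (∫ ω, Y ω ∂μ)) :=
    integral_tendsto_of_tendsto_of_monotone (fun H => (hX H).integrable one_le_two)
      (memLp.integrable one_le_two) (.of_forall hmono) hlim
  have tendsto_sq : Tendsto (fun H => ∫ ω, X H ω ^ 2 ∂μ) atTop (𝓝 (∫ ω, Y ω ^ 2 ∂μ)) :=
    integral_tendsto_of_tendsto_of_monotone (fun H => (hX H).integrable_sq) integrable_sq
      (.of_forall fun ω H H' h => pow_le_pow_left₀ (hX0 H ω) (hmono ω h) 2)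
      (hlim.mono fun ω h => h.pow 2)
  refine tendsto_nhds_unique ?_ hvar
  rw [variance_eq_sub memLp]
  exact (tendsto_sq.sub (tendsto_mean.pow 2)).congr fun H => (variance_eq_sub (hX H)).symm

end MonotoneLimit

open Classical in
/-- The number of words of length `k` in the trie. -/
noncomputable def levelSize {M A n : ℕ} (k : ℕ) (Ls : Fin n → List (Fin M) → Fin A) : ℝ :=
  ((wordsOfLength (Fin M × Fin A) k).filter (· ∈ GTrie Ls)).card

section LevelSize

variable {M A n : ℕ}

theorem levelSize_nonneg (k : ℕ) (Ls : Fin n → List (Fin M) → Fin A) : 0 ≤ levelSize k Ls :=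
  Nat.cast_nonneg _

theorem levelSize_eq_sum (k : ℕ) (Ls : Fin n → List (Fin M) → Fin A) :
    levelSize k Ls =
      ∑ w ∈ wordsOfLength (Fin M × Fin A) k, (1 - atMostOne {L | Occurs L w} Ls) := by
  classical
  rw [levelSize, ← Finset.sum_boole]
  refine Finset.sum_congr rfl fun w _ => ?_
  have mem_iff : w ∈ GTrie Ls ↔ ¬Nat.card {i // Ls i ∈ {L | Occurs L w}} ≤ 1 := by
    rw [not_le]
    rfl
  rw [atMostOne, mem_iff]
  split_ifs <;> simp_all

theorem gtrieSize_eq_sum_levelSize {H : ℕ} {Ls : Fin n → List (Fin M) → Fin A}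
    (hH : ∀ k ≥ H, levelSize k Ls = 0) : gtrieSize Ls = ∑ k ∈ Finset.range H, levelSize k Ls := by
  classical
  let words (k : ℕ) : Finset (List (Fin M × Fin A)) :=
    (wordsOfLength (Fin M × Fin A) k).filter (· ∈ GTrie Ls)
  have mem_words {k : ℕ} {w : List (Fin M × Fin A)} :
      w ∈ words k ↔ w.length = k ∧ w ∈ GTrie Ls := by
    rw [Finset.mem_filter, mem_wordsOfLength]
  have GTrie_eq : GTrie Ls = ((Finset.range H).biUnion words : Set (List (Fin M × Fin A))) := by
    ext w
    simp only [Finset.mem_coe, Finset.mem_biUnion, Finset.mem_range, mem_words]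
    refine ⟨fun hw => ⟨w.length, ?_, rfl, hw⟩, fun ⟨_, _, _, hw⟩ => hw⟩
    by_contra! hlen
    have words_empty : words w.length = ∅ :=
      Finset.card_eq_zero.1 (Nat.cast_eq_zero.1 (hH _ hlen))
    exact Finset.notMem_empty w (words_empty ▸ mem_words.2 ⟨rfl, hw⟩)
  rw [gtrieSize, GTrie_eq, Set.ncard_coe_finset, Finset.card_biUnion, Nat.cast_sum]
  · rfl
  · intro k _ K _ hkK
    exact Finset.disjoint_left.2 fun w hk hK =>
      hkK ((mem_words.1 hk).1.symm.trans (mem_words.1 hK).1)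

variable {μL : Measure (List (Fin M) → Fin A)} [IsProbabilityMeasure μL]

theorem memLp_atMostOne_setOf_occurs (w : List (Fin M × Fin A)) :
    MemLp (fun Ls : Fin n → _ => atMostOne {L | Occurs L w} Ls) 2 (Measure.pi fun _ => μL) :=
  .of_bound (measurable_atMostOne (measurableSet_setOf_occurs w)).aestronglyMeasurable 1
    (.of_forall fun _ => norm_atMostOne_le_one _ _)

theorem memLp_one_sub_atMostOne_setOf_occurs (w : List (Fin M × Fin A)) :
    MemLp (fun Ls : Fin n → _ => 1 - atMostOne {L | Occurs L w} Ls) 2 (Measure.pi fun _ => μL) :=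
  (memLp_const 1).sub (memLp_atMostOne_setOf_occurs w)

theorem memLp_levelSize (k : ℕ) :
    MemLp (fun Ls : Fin n → _ => levelSize k Ls) 2 (Measure.pi fun _ => μL) := by
  simp_rw [levelSize_eq_sum]
  exact memLp_finsetSum _ fun w _ => memLp_one_sub_atMostOne_setOf_occurs w

theorem covariance_one_sub_atMostOne {q : ℝ} [NeZero A] (hq : 0 ≤ q)
    (hμL : IsLabelingMeasure (fun _ => q) μL) (w w' : List (Fin M × Fin A)) :
    covariance (fun Ls : Fin n → _ => 1 - atMostOne {L | Occurs L w} Ls)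
        (fun Ls => 1 - atMostOne {L | Occurs L w'} Ls) (Measure.pi fun _ => μL) =
      jointAtMostOne n (q ^ w.length) (q ^ w'.length) (jointOccurProb q w w') -
        jointAtMostOne n (q ^ w.length) (q ^ w'.length) (q ^ w.length * q ^ w'.length) := by
  have hw := memLp_atMostOne_setOf_occurs (n := n) (μL := μL) w
  have hw' := memLp_atMostOne_setOf_occurs (n := n) (μL := μL) w'
  rw [covariance_const_sub_left (hw.integrable one_le_two),
    covariance_const_sub_right (hw'.integrable one_le_two), neg_neg, covariance_eq_sub hw hw',
    integral_atMostOne (measurableSet_setOf_occurs w),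
    integral_atMostOne (measurableSet_setOf_occurs w'), jointAtMostOne_mul]
  simp only [Pi.mul_apply]
  rw [integral_atMostOne_mul (measurableSet_setOf_occurs w) (measurableSet_setOf_occurs w'),
    Fintype.card_fin, measureReal_setOf_occurs hq hμL, measureReal_setOf_occurs hq hμL,
    measureReal_setOf_occurs_inter hq hμL]

theorem covariance_levelSize [NeZero A] (hμL : IsLabelingMeasure (fun _ => (A : ℝ)⁻¹) μL)
    (k K : ℕ) :
    covariance (fun Ls : Fin n → _ => levelSize k Ls) (fun Ls => levelSize K Ls)
      (Measure.pi fun _ => μL) = levelCovariance M A n k K := by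
  simp_rw [levelSize_eq_sum]
  rw [covariance_fun_sum_fun_sum' (fun w _ => memLp_one_sub_atMostOne_setOf_occurs w)
    (fun w _ => memLp_one_sub_atMostOne_setOf_occurs w), levelCovariance, pairSum]
  refine Finset.sum_congr rfl fun w hw => Finset.sum_congr rfl fun w' hw' => ?_
  rw [covariance_one_sub_atMostOne (by positivity) hμL, mem_wordsOfLength.1 hw,
    mem_wordsOfLength.1 hw']

theorem integral_levelSize_le [NeZero A] (hμL : IsLabelingMeasure (fun _ => (A : ℝ)⁻¹) μL)
    (k : ℕ) :
    ∫ Ls : Fin n → _, levelSize k Ls ∂(Measure.pi fun _ => μL) ≤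
      (n : ℝ) ^ 2 * ((M : ℝ) / A) ^ k := by
  have hA : (1 : ℝ) ≤ A := by exact_mod_cast NeZero.one_le (n := A)
  simp_rw [levelSize_eq_sum]
  rw [integral_finsetSum _ fun w _ =>
    (memLp_one_sub_atMostOne_setOf_occurs w).integrable one_le_two]
  calc ∑ w ∈ wordsOfLength (Fin M × Fin A) k, ∫ Ls : Fin n → _,
          (1 - atMostOne {L | Occurs L w} Ls) ∂(Measure.pi fun _ => μL)
      ≤ ∑ _w ∈ wordsOfLength (Fin M × Fin A) k, (n : ℝ) ^ 2 * ((A : ℝ)⁻¹ ^ k) ^ 2 := by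
        refine Finset.sum_le_sum fun w hw => ?_
        rw [integral_sub (integrable_const 1)
          ((memLp_atMostOne_setOf_occurs w).integrable one_le_two),
          integral_atMostOne (measurableSet_setOf_occurs w), integral_const, probReal_univ,
          one_smul, Fintype.card_fin, measureReal_setOf_occurs (by positivity) hμL,
          mem_wordsOfLength.1 hw]
        exact one_sub_jointAtMostOne_self_le (by positivity)
          (pow_le_one₀ (by positivity) (inv_le_one_of_one_le₀ hA)) n
    _ = (n : ℝ) ^ 2 * ((M : ℝ) / A) ^ k := by
        rw [sum_wordsOfLength_const, div_pow, mul_pow, inv_pow]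
        field_simp

theorem ae_eventually_levelSize_eq_zero [NeZero A] (hMA : M < A)
    (hμL : IsLabelingMeasure (fun _ => (A : ℝ)⁻¹) μL) :
    ∀ᵐ Ls : Fin n → _ ∂(Measure.pi fun _ => μL), ∀ᶠ k in atTop, levelSize k Ls = 0 := by
  set ν : Measure (Fin n → List (Fin M) → Fin A) := Measure.pi fun _ => μL
  have ratio_lt_one : (M : ℝ) / A < 1 :=
    (div_lt_one (Nat.cast_pos.2 (NeZero.pos A))).2 (Nat.cast_lt.2 hMA)
  have meas_le (k : ℕ) :
      ν {Ls | 1 ≤ levelSize k Ls} ≤ ENNReal.ofReal ((n : ℝ) ^ 2 * ((M : ℝ) / A) ^ k) := by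
    rw [← ofReal_measureReal]
    refine ENNReal.ofReal_le_ofReal (le_trans ?_ (integral_levelSize_le hμL k))
    simpa only [one_mul] using mul_meas_ge_le_integral_of_nonneg (μ := ν)
      (.of_forall fun Ls => levelSize_nonneg k Ls) ((memLp_levelSize k).integrable one_le_two) 1
  have tsum_ne_top : ∑' k, ν {Ls | 1 ≤ levelSize k Ls} ≠ ⊤ :=
    ne_top_of_le_ne_top ((summable_geometric_of_lt_one (by positivity)
      ratio_lt_one).mul_left _).tsum_ofReal_ne_top (ENNReal.tsum_le_tsum meas_le)
  filter_upwards [ae_eventually_notMem tsum_ne_top] with Ls hLs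
  refine hLs.mono fun k hk => ?_
  have card_lt_one : levelSize k Ls < 1 := not_le.1 hk
  rw [levelSize] at card_lt_one ⊢
  exact_mod_cast Nat.lt_one_iff.1 (by exact_mod_cast card_lt_one)

theorem variance_sum_levelSize [NeZero A] (hμL : IsLabelingMeasure (fun _ => (A : ℝ)⁻¹) μL)
    (H : ℕ) :
    variance (fun Ls : Fin n → _ => ∑ k ∈ Finset.range H, levelSize k Ls)
        (Measure.pi fun _ => μL) =
      ∑ k ∈ Finset.range H, ∑ K ∈ Finset.range H, levelCovariance M A n k K := by
  rw [variance_fun_sum' fun k _ => memLp_levelSize k]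
  simp_rw [covariance_levelSize hμL]

theorem integral_sum_levelSize_le [NeZero A] (hMA : M < A)
    (hμL : IsLabelingMeasure (fun _ => (A : ℝ)⁻¹) μL) (H : ℕ) :
    ∫ Ls : Fin n → _, ∑ k ∈ Finset.range H, levelSize k Ls ∂(Measure.pi fun _ => μL) ≤
      (n : ℝ) ^ 2 * (1 - (M : ℝ) / A)⁻¹ := by
  have ratio_lt_one : (M : ℝ) / A < 1 :=
    (div_lt_one (Nat.cast_pos.2 (NeZero.pos A))).2 (Nat.cast_lt.2 hMA)
  rw [integral_finsetSum _ fun k _ => (memLp_levelSize k).integrable one_le_two]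
  refine (Finset.sum_le_sum fun k _ => integral_levelSize_le hμL k).trans ?_
  rw [← Finset.mul_sum, ← tsum_geometric_of_lt_one (by positivity) ratio_lt_one]
  gcongr
  exact (summable_geometric_of_lt_one (by positivity) ratio_lt_one).sum_le_tsum _
    fun _ _ => by positivity

theorem variance_gtrieSize (hM : 1 ≤ M) (hMA : M < A)
    (hμL : IsLabelingMeasure (fun _ => (A : ℝ)⁻¹) μL) (hn : 4 ≤ n) :
    variance (fun Ls : Fin n → _ => gtrieSize Ls) (Measure.pi fun _ => μL) =
      ∑' i, varianceTerm n M A i := by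
  have : NeZero A := ⟨by omega⟩
  refine variance_eq_of_tendsto_of_monotone
    (X := fun H Ls => ∑ k ∈ Finset.range H, levelSize k Ls)
    (fun H => memLp_finsetSum _ fun k _ => memLp_levelSize k)
    (fun H Ls => Finset.sum_nonneg fun k _ => levelSize_nonneg k Ls)
    (fun Ls => (Finset.sum_mono_set_of_nonneg fun k => levelSize_nonneg k Ls).comp
      Finset.range_mono)
    (integral_sum_levelSize_le hMA hμL) ?_ ?_
  · simp_rw [variance_sum_levelSize hμL]
    exact tendsto_sum_range_sum_range_of_symm (levelCovariance_comm n)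
      (hasSum_symmWeight_mul_levelCovariance hn hM hMA)
  · filter_upwards [ae_eventually_levelSize_eq_zero hMA hμL] with Ls hLs
    obtain ⟨N, hN⟩ := eventually_atTop.1 hLs
    refine tendsto_const_nhds.congr' ?_
    filter_upwards [eventually_ge_atTop N] with H hH
    exact gtrieSize_eq_sum_levelSize fun k hk => hN k (hH.trans hk)

end LevelSize

theorem gtrie_variance_uniform_case_general
    {M A : ℕ} (hM : 1 ≤ M) (hMA : M < A)
    (p : Fin A → ℝ) (hp : ∀ j, p j = 1 / (A : ℝ))
    (ρ : ℝ) (hρ : ρ = 1 + Real.logb A M)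
    (μL : Measure (List (Fin M) → Fin A)) [IsProbabilityMeasure μL]
    (hμL : IsLabelingMeasure p μL)
    (μ : (n : ℕ) → Measure (Fin n → List (Fin M) → Fin A))
    (hμ : ∀ n, μ n = Measure.pi fun _ => μL)
    (V : ℕ → ℝ)
    (hV : ∀ n, V n = variance (fun Ls => gtrieSize Ls) (μ n)) :
    ∃ PV : ℝ → ℝ, Continuous PV ∧ (∀ x, PV (x + 1) = PV x) ∧ (∀ x, 0 < PV x) ∧
      ∃ e : ℕ → ℝ, Tendsto e atTop (𝓝 0) ∧
        ∀ᶠ n : ℕ in atTop, V n = PV (Real.logb A n) * (n : ℝ) ^ ρ * (1 + e n) := by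
  obtain rfl : p = fun _ => (A : ℝ)⁻¹ := funext fun j => by rw [hp, one_div]
  have hb : (1 : ℝ) ≤ M := Nat.one_le_cast.2 hM
  have hbA : (M : ℝ) < A := Nat.cast_lt.2 hMA
  have hA : (1 : ℝ) < A := hb.trans_lt hbA
  have rpow_exponent : (A : ℝ) ^ ρ = M * A := by
    rw [hρ, Real.rpow_add (by positivity), Real.rpow_one,
      Real.rpow_logb (by positivity) hA.ne' (by positivity), mul_comm]
  refine exists_periodic_mul_rpow_of_tendsto_div hA (continuousOn_limitVariance hb hbA)
    (fun t ht => limitVariance_pos hb hbA ht) (fun t _ => ?_) ?_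
  · simpa only [pow_one, rpow_exponent] using
      limitVariance_mul_pow (b := (M : ℝ)) (by positivity) (by positivity) t 1
  · refine (tendsto_tsum_varianceTerm_div_limitVariance hb hbA).congr' ?_
    filter_upwards [eventually_ge_atTop 4] with n hn
    rw [hV, hμ, variance_gtrieSize hM hMA hμL hn]

/-- **Variance of the size of a G-trie, uniform case** (Proposition 2(i)).
In the uniform case `p_1 = … = p_A = 1/A` with `M ≥ 2` (and `M < A`, the non-explosive
condition), with `ρ = 1 + log_A M > 1`, there is a continuous positive 1-periodic function
`P_V` such that `Var(S_n) = P_V(log_A n) · n^ρ · (1 + o(1))` as `n → ∞`. -/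
theorem gtrie_variance_uniform_case
    {M A : ℕ} (hM : 2 ≤ M) (hA : 2 ≤ A) (hMA : M < A)
    (p : Fin A → ℝ) (hp : ∀ j, p j = 1 / (A : ℝ))
    (ρ : ℝ) (hρ : ρ = 1 + Real.logb A M)
    (μL : Measure (List (Fin M) → Fin A)) [IsProbabilityMeasure μL]
    (hμL : IsLabelingMeasure p μL)
    (μ : (n : ℕ) → Measure (Fin n → List (Fin M) → Fin A))
    (hμ : ∀ n, μ n = Measure.pi fun _ => μL)
    (V : ℕ → ℝ)
    (hV : ∀ n, V n = variance (fun Ls => gtrieSize Ls) (μ n)) :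
    ∃ PV : ℝ → ℝ, Continuous PV ∧ (∀ x, PV (x + 1) = PV x) ∧ (∀ x, 0 < PV x) ∧
      ∃ e : ℕ → ℝ, Tendsto e atTop (𝓝 0) ∧
        ∀ᶠ n : ℕ in atTop, V n = PV (Real.logb A n) * (n : ℝ) ^ ρ * (1 + e n) :=
  gtrie_variance_uniform_case_general (one_le_two.trans hM) hMA p hp ρ hρ μL hμL μ hμ V hV
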